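/- In the nonlinear setting with standing conditions (N1)–(N5), the sequence of normalized Hausdorff measures m_n converges in the weak-* topology to Lebesgue measure on the interval [0,1]. -/

import Mathlib

open Set Filter MeasureTheory Topology

noncomputable section

/-- Composition `g_{i₁} ∘ g_{i₂} ∘ ⋯ ∘ g_{i_l}` along a finite word. -/
def wordComp (g : ℕ → ℝ → ℝ) : List ℕ → ℝ → ℝ
  | [] => id
  | k :: w => g k ∘ wordComp g w

/-- The limit set `J_n` of the IFS `S_n = {g_1, …, g_n}`. -/
def limitSet (g : ℕ → ℝ → ℝ) (n : ℕ) : Set ℝ :=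
  ⋂ l : ℕ, ⋃ w ∈ {w : List ℕ | w.length = l + 1 ∧ ∀ i ∈ w, 1 ≤ i ∧ i ≤ n},
    wordComp g w '' Set.Icc (0 : ℝ) 1

/-- The distortion `κ(g) = sup_{x,y ∈ [0,1]} |g′(y)|/|g′(x)|` of a map with derivative `f'`. -/
def distortion (f' : ℝ → ℝ) : ℝ :=
  ⨆ x ∈ Set.Icc (0 : ℝ) 1, ⨆ y ∈ Set.Icc (0 : ℝ) 1, |f' y| / |f' x|

/-- The nonlinear setting of the paper: a strictly decreasing sequence `b_k → 0` with `b_0 = 1`,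
    decreasing `C²` diffeomorphisms `g_k : [0,1] → [b_k, b_{k-1}]` (with first and second
    derivatives `g'` and `g''`), the Hausdorff dimensions `h_n` of the limit sets `J_n`, and
    the standing conditions (N1)–(N5). -/
structure NonlinearIFS where
  b : ℕ → ℝ
  g : ℕ → ℝ → ℝ
  g' : ℕ → ℝ → ℝ
  g'' : ℕ → ℝ → ℝ
  h : ℕ → ℝ
  b_zero : b 0 = 1
  b_anti : StrictAnti b
  b_lim : Filter.Tendsto b Filter.atTop (nhds 0)
  g_image : ∀ k, 1 ≤ k → g k '' Set.Icc (0 : ℝ) 1 = Set.Icc (b k) (b (k - 1))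
  g_anti : ∀ k, 1 ≤ k → StrictAntiOn (g k) (Set.Icc (0 : ℝ) 1)
  g_zero : ∀ k, 1 ≤ k → g k 0 = b (k - 1)
  g_one : ∀ k, 1 ≤ k → g k 1 = b k
  deriv1 : ∀ k, 1 ≤ k → ∀ x ∈ Set.Icc (0 : ℝ) 1, HasDerivAt (g k) (g' k x) x
  deriv2 : ∀ k, 1 ≤ k → ∀ x ∈ Set.Icc (0 : ℝ) 1, HasDerivAt (g' k) (g'' k x) x
  deriv_ne : ∀ k, 1 ≤ k → ∀ x ∈ Set.Icc (0 : ℝ) 1, g' k x ≠ 0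
  h_dim : ∀ n, 1 ≤ n → dimH (limitSet g n) = ENNReal.ofReal (h n)
  N1 : Filter.Tendsto (fun n : ℕ => (1 - h n) * Real.log n) Filter.atTop (nhds 0)
  N2 : Filter.Tendsto (fun n : ℕ => ⨆ k ∈ Set.Ici n, b k / b (k + 1)) Filter.atTop (nhds 1)
  N3 : ∃ c : ℝ, 0 < c ∧ ∀ n, 1 ≤ n → ∀ x ∈ Set.Icc (0 : ℝ) 1, |g'' n x / g' n x| < c
  N4 : Filter.Tendsto (fun n : ℕ => distortion (g' n)) Filter.atTop (nhds 1)
  N5 : ∃ α : ℝ, α < 1 ∧ ∀ n, 1 ≤ n → ∀ x ∈ Set.Icc (0 : ℝ) 1, |g' n x| < α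

/-- The normalized Hausdorff measure `m_n(A) = H_{h_n}(A ∩ J_n)/H_{h_n}(J_n)`. -/
def normMeas (S : NonlinearIFS) (n : ℕ) (A : Set ℝ) : ENNReal :=
  μH[S.h n] (A ∩ limitSet S.g n) / μH[S.h n] (limitSet S.g n)

/-- The normalized Hausdorff measure `m_n` as a Borel measure on `ℝ`. -/
def normMeasure (S : NonlinearIFS) (n : ℕ) : Measure ℝ :=
  (μH[S.h n] (limitSet S.g n))⁻¹ • (μH[S.h n]).restrict (limitSet S.g n)

lemma aux_ediam_le {U : Set ℝ} {d : ℝ} (h : ∀ x ∈ U, ∀ y ∈ U, |x - y| ≤ d) :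
    Metric.ediam U ≤ ENNReal.ofReal d := by
  refine Metric.ediam_le fun x hx y hy => ?_
  rw [edist_dist]
  exact ENNReal.ofReal_le_ofReal (h x hx y hy)

/-- upper bound for Hausdorff measure from finite covers -/
lemma hm_le_of_covers (J : Set ℝ) (t : ℝ) (ht : 0 < t) (B : ℝ)
    (H : ∀ η : ℝ, 0 < η → ∃ (κ : Type) (_ : Fintype κ) (U : κ → Set ℝ) (d : κ → ℝ),
      (∀ k, 0 ≤ d k ∧ d k ≤ η) ∧ (∀ k, ∀ x ∈ U k, ∀ y ∈ U k, |x - y| ≤ d k) ∧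
      J ⊆ (⋃ k, U k) ∧ ∑ k, d k ^ t ≤ B) : μH[t] J ≤ ENNReal.ofReal B := by
  choose κ hκ U d hd hU hJ hs using fun m : ℕ => H (1 / ((m : ℝ) + 1)) Nat.one_div_pos_of_nat
  have hr : Tendsto (fun m : ℕ => ENNReal.ofReal (1 / ((m : ℝ) + 1))) atTop (𝓝 0) := by
    have := ENNReal.tendsto_ofReal (tendsto_one_div_add_atTop_nhds_zero_nat (𝕜 := ℝ))
    simpa using this
  have key := Measure.hausdorffMeasure_le_liminf_sum t J (l := atTop)
    (fun m : ℕ => ENNReal.ofReal (1 / ((m : ℝ) + 1))) hr U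
    (Eventually.of_forall fun m i => (aux_ediam_le (hU m i)).trans
      (ENNReal.ofReal_le_ofReal (hd m i).2))
    (Eventually.of_forall hJ)
  refine key.trans ?_
  calc _ ≤ liminf (fun _ : ℕ => ENNReal.ofReal B) atTop := by
        refine liminf_le_liminf (Eventually.of_forall fun m => ?_)
        calc ∑ i, Metric.ediam (U m i) ^ t ≤ ∑ i, ENNReal.ofReal (d m i ^ t) := by
              refine Finset.sum_le_sum fun i _ => ?_
              rw [← ENNReal.ofReal_rpow_of_nonneg (hd m i).1 ht.le]
              exact ENNReal.rpow_le_rpow (aux_ediam_le (hU m i)) ht.le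
          _ = ENNReal.ofReal (∑ i, d m i ^ t) := by
              rw [ENNReal.ofReal_sum_of_nonneg]
              intro i _
              exact Real.rpow_nonneg (hd m i).1 _
          _ ≤ _ := ENNReal.ofReal_le_ofReal (hs m)
    _ = _ := by simp

/-- finite covers from null Hausdorff measure -/
lemma exists_cover_of_hm_zero (J : Set ℝ) (hJ : IsCompact J) (t : ℝ) (ht : 0 < t)
    (h0 : μH[t] J = 0) (ε : ℝ) (hε : 0 < ε) :
    ∃ (s : Finset ℕ) (U : ℕ → Set ℝ) (d : ℕ → ℝ), (∀ i, 0 < d i) ∧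
      (∀ i, ∀ x ∈ U i, ∀ y ∈ U i, |x - y| ≤ d i) ∧ J ⊆ (⋃ i ∈ s, U i) ∧
      ∑ i ∈ s, d i ^ t < ε := by
  rw [Measure.hausdorffMeasure_apply] at h0
  have h1 := (ENNReal.iSup_eq_zero.1 h0) 1
  have h2 : (⨅ (T : ℕ → Set ℝ) (_ : J ⊆ ⋃ n, T n) (_ : ∀ n, Metric.ediam (T n) ≤ 1),
          ∑' n, ⨆ _ : (T n).Nonempty, Metric.ediam (T n) ^ t) < ENNReal.ofReal (ε / 2) := by
    have : (⨅ (T : ℕ → Set ℝ) (_ : J ⊆ ⋃ n, T n) (_ : ∀ n, Metric.ediam (T n) ≤ 1),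
          ∑' n, ⨆ _ : (T n).Nonempty, Metric.ediam (T n) ^ t) = 0 := by
      simpa using h1
    rw [this]; simpa using hε
  simp only [iInf_lt_iff] at h2
  obtain ⟨T, hT, hd, hs⟩ := h2
  -- real diameters
  have hfin : ∀ n, Metric.ediam (T n) ≠ ⊤ := fun n => ne_top_of_le_ne_top (by simp) (hd n)
  set D : ℕ → ℝ := fun n => (Metric.ediam (T n)).toReal with hD
  have hD0 : ∀ n, 0 ≤ D n := fun n => ENNReal.toReal_nonneg
  have hDT : ∀ n, ∀ x ∈ T n, ∀ y ∈ T n, |x - y| ≤ D n := by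
    intro n x hx y hy
    have := Metric.edist_le_ediam_of_mem hx hy
    rw [edist_dist] at this
    have h3 := ENNReal.toReal_mono (hfin n) this
    rwa [ENNReal.toReal_ofReal dist_nonneg, Real.dist_eq] at h3
  have hsum : ∀ s : Finset ℕ, ∑ n ∈ s, D n ^ t ≤ ε / 2 := by
    intro s
    have h3 : ∀ n, ENNReal.ofReal (D n ^ t) = ⨆ _ : (T n).Nonempty, Metric.ediam (T n) ^ t := by
      intro n
      rcases (T n).eq_empty_or_nonempty with h | h
      · simp [hD, h, Real.zero_rpow ht.ne']
      · rw [iSup_pos h, ← ENNReal.ofReal_rpow_of_nonneg (hD0 n) ht.le, hD,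
          ENNReal.ofReal_toReal (hfin n)]
    have h4 : ENNReal.ofReal (∑ n ∈ s, D n ^ t) ≤ ENNReal.ofReal (ε / 2) := by
      rw [ENNReal.ofReal_sum_of_nonneg (fun i _ => Real.rpow_nonneg (hD0 i) _)]
      simp_rw [h3]
      exact (ENNReal.sum_le_tsum s).trans hs.le
    exact (ENNReal.ofReal_le_ofReal_iff (by positivity)).1 h4
  set d : ℕ → ℝ := fun n => (D n ^ t + ε / 2 / 2 / 2 ^ n / 2) ^ (t⁻¹) with hdd
  have hlt : ∀ n, D n < d n := by
    intro n
    have : D n = (D n ^ t) ^ (t⁻¹) := by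
      rw [← Real.rpow_mul (hD0 n), mul_inv_cancel₀ ht.ne', Real.rpow_one]
    rw [this]
    refine Real.rpow_lt_rpow (Real.rpow_nonneg (hD0 n) _) ?_ (by positivity)
    have : 0 < ε / 2 / 2 / 2 ^ n / 2 := by positivity
    linarith
  have hdp : ∀ n, d n ^ t = D n ^ t + ε / 2 / 2 / 2 ^ n / 2 := by
    intro n
    rw [hdd]
    have : 0 ≤ D n ^ t + ε / 2 / 2 / 2 ^ n / 2 := by
      have := Real.rpow_nonneg (hD0 n) t
      positivity
    simp only
    rw [← Real.rpow_mul this, inv_mul_cancel₀ ht.ne', Real.rpow_one]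
  set U : ℕ → Set ℝ := fun n => Metric.thickening ((d n - D n) / 2) (T n) with hU
  have hcov : J ⊆ ⋃ n, U n := by
    refine hT.trans (iUnion_mono fun n => Metric.self_subset_thickening ?_ _)
    linarith [hlt n]
  obtain ⟨s, hs'⟩ := hJ.elim_finite_subcover U (fun n => Metric.isOpen_thickening) hcov
  refine ⟨s, U, d, fun i => (hD0 i).trans_lt (hlt i), ?_, hs', ?_⟩
  · intro i x hx y hy
    obtain ⟨x', hx', h1⟩ := Metric.mem_thickening_iff.1 hx
    obtain ⟨y', hy', h2⟩ := Metric.mem_thickening_iff.1 hy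
    have h3 := hDT i x' hx' y' hy'
    rw [Real.dist_eq] at h1 h2
    rw [abs_lt] at h1 h2
    rw [abs_le] at h3 ⊢
    constructor <;> linarith
  · simp_rw [hdp]
    rw [Finset.sum_add_distrib]
    have h5 : ∑ n ∈ s, ε / 2 / 2 / 2 ^ n / 2 ≤ ε / 4 := by
      have hss : Summable (fun n : ℕ => ε / 2 / 2 / 2 ^ n / 2) :=
        (summable_geometric_two' (ε / 2)).div_const 2
      calc _ ≤ ∑' n : ℕ, ε / 2 / 2 / 2 ^ n / 2 :=
            hss.sum_le_tsum s (fun i _ => by positivity)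
        _ = ε / 4 := by rw [tsum_div_const, tsum_geometric_two']; ring
    linarith [hsum s]

/-- iterating contractions gives null measure -/
lemma hm_zero_of_contractions {ι : Type} [Fintype ι] (J : Set ℝ) (hJI : J ⊆ Icc (0:ℝ) 1)
    (φ : ι → ℝ → ℝ) (R : ι → ℝ) (hR : ∀ i, 0 ≤ R i)
    (hφ : ∀ i, ∀ x ∈ J, ∀ y ∈ J, |φ i x - φ i y| ≤ R i * |x - y|)
    (hJ : J ⊆ ⋃ i, φ i '' J) (t : ℝ) (ht : 0 < t) (hsum : ∑ i, R i ^ t < 1) :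
    μH[t] J = 0 := by
  set q := ∑ i, R i ^ t with hq
  have hq0 : 0 ≤ q := Finset.sum_nonneg fun i _ => Real.rpow_nonneg (hR i) _
  have iter : ∀ m : ℕ, ∃ (κ : Type) (_ : Fintype κ) (U : κ → Set ℝ) (d : κ → ℝ),
      (∀ k, 0 ≤ d k) ∧ (∀ k, ∀ x ∈ U k, ∀ y ∈ U k, |x - y| ≤ d k) ∧
      J ⊆ (⋃ k, U k) ∧ ∑ k, d k ^ t ≤ q ^ m := by
    intro m
    induction m with
    | zero =>
      refine ⟨Unit, inferInstance, fun _ => Icc 0 1, fun _ => 1, by simp, ?_, fun x hx => mem_iUnion.2 ⟨(), hJI hx⟩,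
        by simp⟩
      intro _ x hx y hy
      rw [abs_le]; constructor <;> linarith [hx.1, hx.2, hy.1, hy.2]
    | succ m ih =>
      obtain ⟨κ, hκ, U, d, hd, hU, hc, hs⟩ := ih
      refine ⟨ι × κ, inferInstance, fun p => φ p.1 '' (U p.2 ∩ J), fun p => R p.1 * d p.2,
        fun p => mul_nonneg (hR _) (hd _), ?_, ?_, ?_⟩
      · rintro ⟨i, k⟩ _ ⟨x, hx, rfl⟩ _ ⟨y, hy, rfl⟩
        exact (hφ i x hx.2 y hy.2).trans (mul_le_mul_of_nonneg_left (hU k x hx.1 y hy.1) (hR i))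
      · intro x hx
        obtain ⟨i, hi⟩ := mem_iUnion.1 (hJ hx)
        obtain ⟨y, hy, rfl⟩ := hi
        obtain ⟨k, hk⟩ := mem_iUnion.1 (hc hy)
        exact mem_iUnion.2 ⟨(i, k), y, ⟨hk, hy⟩, rfl⟩
      · rw [Fintype.sum_prod_type]
        simp_rw [fun i k => Real.mul_rpow (z := t) (hR i) (hd k)]
        simp_rw [← Finset.mul_sum]
        rw [← Finset.sum_mul, pow_succ, mul_comm]
        exact mul_le_mul_of_nonneg_right hs hq0
  have hle : ∀ ε : ℝ, 0 < ε → μH[t] J ≤ ENNReal.ofReal ε := by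
    intro ε hε
    refine hm_le_of_covers J t ht ε fun η hη => ?_
    have hmin : 0 < min ε (η ^ t) := lt_min hε (Real.rpow_pos_of_pos hη _)
    obtain ⟨m, hm⟩ := exists_pow_lt_of_lt_one hmin hsum
    obtain ⟨κ, hκ, U, d, hd, hU, hc, hs⟩ := iter m
    refine ⟨κ, hκ, U, d, fun k => ⟨hd k, ?_⟩, hU, hc, hs.trans (hm.le.trans (min_le_left _ _))⟩
    have h1 : d k ^ t ≤ η ^ t :=
      (Finset.single_le_sum (f := fun k => d k ^ t) (fun k _ => Real.rpow_nonneg (hd k) _)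
        (Finset.mem_univ k)).trans (hs.trans (hm.le.trans (min_le_right _ _)))
    exact (Real.rpow_le_rpow_iff (hd k) hη.le ht).1 h1
  refine le_antisymm (ENNReal.le_of_forall_pos_le_add fun ε hε _ => ?_) bot_le
  simpa using hle ε hε

lemma exists_gap {ι : Type} [Finite ι] (A : ι → Set ℝ) (hA : ∀ i, IsCompact (A i))
    (hdisj : ∀ i j, i ≠ j → Disjoint (A i) (A j)) :
    ∃ δ : ℝ, 0 < δ ∧ δ ≤ 1 ∧ ∀ i j, i ≠ j → ∀ x ∈ A i, ∀ y ∈ A j, δ < |x - y| := by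
  have h1 : ∀ p : ι × ι, ∃ δ : ℝ, 0 < δ ∧ δ ≤ 1 ∧ (p.1 ≠ p.2 →
      ∀ x ∈ A p.1, ∀ y ∈ A p.2, δ < |x - y|) := by
    rintro ⟨i, j⟩
    by_cases hij : i = j
    · exact ⟨1, one_pos, le_rfl, fun h => absurd hij h⟩
    · obtain ⟨δ, hδ, h⟩ := Metric.exists_pos_forall_lt_edist (hA i) (hA j).isClosed (hdisj i j hij)
      refine ⟨min δ 1, lt_min hδ one_pos, min_le_right _ _, fun _ x hx y hy => ?_⟩
      have := h x hx y hy
      rw [edist_dist, Real.dist_eq] at this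
      exact (min_le_left _ _).trans_lt ((ENNReal.lt_ofReal_iff_toReal_lt (by simp)).1 this)
  choose δ hδ hδ1 h using h1
  rcases isEmpty_or_nonempty ι with he | he
  · exact ⟨1, one_pos, le_rfl, fun i => (he.false i).elim⟩
  obtain ⟨p, hp⟩ := Finite.exists_min δ
  exact ⟨δ p, hδ p, hδ1 p, fun i j hij x hx y hy => (hp (i, j)).trans_lt (h (i, j) hij x hx y hy)⟩

/-- lower bound lemma -/
lemma hm_ne_zero_of_expanding {ι : Type} [Fintype ι] [Nontrivial ι] (J : Set ℝ)
    (hJc : IsCompact J) (hne : J.Nonempty)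
    (φ : ι → ℝ → ℝ) (r : ι → ℝ) (hr : ∀ i, 0 < r i)
    (hφc : ∀ i, ContinuousOn (φ i) J) (hmaps : ∀ i, MapsTo (φ i) J J)
    (hφ : ∀ i, ∀ x ∈ J, ∀ y ∈ J, r i * |x - y| ≤ |φ i x - φ i y|)
    (hdisj : ∀ i j, i ≠ j → Disjoint (φ i '' J) (φ j '' J))
    (t : ℝ) (ht : 0 < t) (hsum : 1 ≤ ∑ i, r i ^ t) :
    μH[t] J ≠ 0 := by
  classical
  obtain ⟨δ, hδ, -, hgap⟩ := exists_gap (fun i => φ i '' J)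
    (fun i => hJc.image_of_continuousOn (hφc i)) hdisj
  have main : ∀ N : ℕ, ∀ s : Finset ℕ, s.card ≤ N → ∀ (U : ℕ → Set ℝ) (d : ℕ → ℝ),
      (∀ i, 0 < d i) → (∀ i, ∀ x ∈ U i, ∀ y ∈ U i, |x - y| ≤ d i) → J ⊆ (⋃ i ∈ s, U i) →
      δ ^ t ≤ ∑ i ∈ s, d i ^ t := by
    intro N
    induction N with
    | zero =>
      intro s hs U d hd hU hJ
      obtain ⟨x, hx⟩ := hne
      have : s = ∅ := Finset.card_eq_zero.1 (Nat.le_zero.1 hs)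
      subst this
      simpa using hJ hx
    | succ N ih =>
      intro s hs U d hd hU hJ
      by_cases hbig : ∃ i ∈ s, δ ≤ d i
      · obtain ⟨i, hi, hdi⟩ := hbig
        calc δ ^ t ≤ d i ^ t := Real.rpow_le_rpow hδ.le hdi ht.le
          _ ≤ _ := Finset.single_le_sum (f := fun i => d i ^ t)
            (fun k _ => Real.rpow_nonneg (hd k).le _) hi
      · push Not at hbig
        let sk : ι → Finset ℕ := fun k => s.filter fun i => (U i ∩ φ k '' J).Nonempty
        have hskne : ∀ k, (sk k).Nonempty := by
          intro k
          obtain ⟨x, hx⟩ := hne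
          have h1 := hJ (hmaps k hx)
          simp only [mem_iUnion] at h1
          obtain ⟨i, hi, hxi⟩ := h1
          exact ⟨i, Finset.mem_filter.2 ⟨hi, φ k x, hxi, x, hx, rfl⟩⟩
        have hskd : ∀ k l, k ≠ l → Disjoint (sk k) (sk l) := by
          intro k l hkl
          rw [Finset.disjoint_left]
          intro i hi hi'
          obtain ⟨his, x, hxU, hx⟩ := Finset.mem_filter.1 hi
          obtain ⟨_, y, hyU, hy⟩ := Finset.mem_filter.1 hi'
          have h1 := hgap k l hkl x hx y hy
          have h2 := hU i x hxU y hyU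
          linarith [hbig i his]
        have hcard : ∀ k, (sk k).card ≤ N := by
          intro k
          obtain ⟨l, hl⟩ := exists_ne k
          have h1 : (sk k ∪ sk l).card ≤ s.card :=
            Finset.card_le_card (Finset.union_subset (Finset.filter_subset _ _)
              (Finset.filter_subset _ _))
          rw [Finset.card_union_of_disjoint (hskd k l hl.symm)] at h1
          have := (hskne l).card_pos
          omega
        have hk : ∀ k, r k ^ t * δ ^ t ≤ ∑ i ∈ sk k, d i ^ t := by
          intro k
          have h1 := ih (sk k) (hcard k) (fun i => {x ∈ J | φ k x ∈ U i}) (fun i => d i / r k)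
            (fun i => div_pos (hd i) (hr k)) ?_ ?_
          · simp_rw [fun i => Real.div_rpow (hd i).le (hr k).le t] at h1
            rw [← Finset.sum_div, le_div_iff₀ (Real.rpow_pos_of_pos (hr k) _)] at h1
            linarith
          · rintro i x ⟨hx, hxU⟩ y ⟨hy, hyU⟩
            rw [le_div_iff₀ (hr k), mul_comm]
            exact (hφ k x hx y hy).trans (hU i _ hxU _ hyU)
          · intro x hx
            have h1 := hJ (hmaps k hx)
            simp only [mem_iUnion] at h1
            obtain ⟨i, hi, hxi⟩ := h1
            simp only [mem_iUnion]
            exact ⟨i, Finset.mem_filter.2 ⟨hi, φ k x, hxi, x, hx, rfl⟩, hx, hxi⟩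
        calc δ ^ t = 1 * δ ^ t := (one_mul _).symm
          _ ≤ (∑ k, r k ^ t) * δ ^ t :=
            mul_le_mul_of_nonneg_right hsum (Real.rpow_nonneg hδ.le _)
          _ = ∑ k, r k ^ t * δ ^ t := Finset.sum_mul _ _ _
          _ ≤ ∑ k, ∑ i ∈ sk k, d i ^ t := Finset.sum_le_sum fun k _ => hk k
          _ = ∑ i ∈ Finset.univ.biUnion sk, d i ^ t :=
            (Finset.sum_biUnion fun k _ l _ hkl => hskd k l hkl).symm
          _ ≤ _ := Finset.sum_le_sum_of_subset_of_nonneg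
            (Finset.biUnion_subset.2 fun k _ => Finset.filter_subset _ _)
            (fun i _ _ => Real.rpow_nonneg (hd i).le _)
  intro h0
  obtain ⟨s, U, d, hd, hU, hc, hs⟩ := exists_cover_of_hm_zero J hJc t ht h0 (δ ^ t)
    (Real.rpow_pos_of_pos hδ _)
  exact absurd (main _ s le_rfl U d hd hU hc) (not_le.2 hs)

/-- log-Lipschitz nonnegative functions on the unit interval -/
def LL (a : ℝ) (f : ℝ → ℝ) : Prop :=
  ∀ x ∈ Icc (0:ℝ) 1, ∀ y ∈ Icc (0:ℝ) 1, 0 ≤ f x ∧ f x ≤ Real.exp (a * |x - y|) * f y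

lemma abs_sub_le_one {x y : ℝ} (hx : x ∈ Icc (0:ℝ) 1) (hy : y ∈ Icc (0:ℝ) 1) : |x - y| ≤ 1 := by
  rw [abs_le]; constructor <;> linarith [hx.1, hx.2, hy.1, hy.2]

lemma LL.nonneg {a : ℝ} {f : ℝ → ℝ} (h : LL a f) {x : ℝ} (hx : x ∈ Icc (0:ℝ) 1) : 0 ≤ f x :=
  (h x hx x hx).1

lemma LL.le {a : ℝ} {f : ℝ → ℝ} (h : LL a f) {x y : ℝ} (hx : x ∈ Icc (0:ℝ) 1)
    (hy : y ∈ Icc (0:ℝ) 1) : f x ≤ Real.exp (a * |x - y|) * f y :=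
  (h x hx y hy).2

lemma LL.le' {a : ℝ} {f : ℝ → ℝ} (h : LL a f) (ha : 0 ≤ a) {ℓ : ℝ} {x y : ℝ}
    (hx : x ∈ Icc (0:ℝ) 1) (hy : y ∈ Icc (0:ℝ) 1) (hl : |x - y| ≤ ℓ) :
    f x ≤ Real.exp (a * ℓ) * f y :=
  (h.le hx hy).trans (mul_le_mul_of_nonneg_right
    (Real.exp_le_exp.2 (mul_le_mul_of_nonneg_left hl ha)) (h.nonneg hy))

lemma LL.bound {a : ℝ} {f : ℝ → ℝ} (h : LL a f) (ha : 0 ≤ a) {x y : ℝ}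
    (hx : x ∈ Icc (0:ℝ) 1) (hy : y ∈ Icc (0:ℝ) 1) :
    f x ≤ Real.exp a * f y := by
  simpa using h.le' ha hx hy (abs_sub_le_one hx hy)

lemma LL.mono {a a' : ℝ} {f : ℝ → ℝ} (h : LL a f) (haa : a ≤ a') : LL a' f :=
  fun _ hx _ hy => ⟨h.nonneg hx, (h.le hx hy).trans (mul_le_mul_of_nonneg_right
    (Real.exp_le_exp.2 (mul_le_mul_of_nonneg_right haa (abs_nonneg _))) (h.nonneg hy))⟩

lemma LL.lipschitz {a : ℝ} {f : ℝ → ℝ} (h : LL a f) (ha : 0 ≤ a) :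
    ∃ L : ℝ, 0 ≤ L ∧ ∀ x ∈ Icc (0:ℝ) 1, ∀ y ∈ Icc (0:ℝ) 1, |f x - f y| ≤ L * |x - y| := by
  have h0 : (0:ℝ) ∈ Icc (0:ℝ) 1 := by simp
  refine ⟨a * Real.exp a * (Real.exp a * f 0), ?_, ?_⟩
  · have := h.nonneg h0
    positivity
  have key : ∀ x ∈ Icc (0:ℝ) 1, ∀ y ∈ Icc (0:ℝ) 1,
      f x - f y ≤ a * Real.exp a * (Real.exp a * f 0) * |x - y| := by
    intro x hx y hy
    have h1 := h.le hx hy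
    have hy0 := h.nonneg hy
    have h2 : Real.exp (a * |x - y|) - 1 ≤ a * |x - y| * Real.exp (a * |x - y|) := by
      have h3 := Real.add_one_le_exp (-(a * |x - y|))
      have h4 : Real.exp (a * |x - y|) * Real.exp (-(a * |x - y|)) = 1 := by
        rw [← Real.exp_add]; simp
      nlinarith [Real.exp_pos (a * |x - y|)]
    have h5 : Real.exp (a * |x - y|) ≤ Real.exp a :=
      Real.exp_le_exp.2 (by nlinarith [abs_sub_le_one hx hy])
    have h6 := h.bound ha hy h0
    have h7 : 0 ≤ a * |x - y| := by positivity
    calc f x - f y ≤ (Real.exp (a * |x - y|) - 1) * f y := by linarith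
      _ ≤ (a * |x - y| * Real.exp a) * f y :=
        mul_le_mul_of_nonneg_right (h2.trans (mul_le_mul_of_nonneg_left h5 h7)) hy0
      _ ≤ (a * |x - y| * Real.exp a) * (Real.exp a * f 0) :=
        mul_le_mul_of_nonneg_left h6 (by positivity)
      _ = _ := by ring
  intro x hx y hy
  rw [abs_le]
  constructor
  · have := key y hy x hx
    rw [abs_sub_comm] at this
    linarith
  · exact key x hx y hy

lemma LL.continuousOn {a : ℝ} {f : ℝ → ℝ} (h : LL a f) (ha : 0 ≤ a) :
    ContinuousOn f (Icc (0:ℝ) 1) := by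
  obtain ⟨L, hL, hl⟩ := h.lipschitz ha
  have : LipschitzOnWith ⟨L, hL⟩ f (Icc (0:ℝ) 1) :=
    LipschitzOnWith.of_dist_le_mul fun x hx y hy => by
      rw [Real.dist_eq, Real.dist_eq]; exact hl x hx y hy
  exact this.continuousOn

lemma LL.of_lipschitz {f : ℝ → ℝ} {δ L : ℝ} (hδ : 0 < δ)
    (hf : ∀ x ∈ Icc (0:ℝ) 1, δ ≤ f x)
    (hl : ∀ x ∈ Icc (0:ℝ) 1, ∀ y ∈ Icc (0:ℝ) 1, |f x - f y| ≤ L * |x - y|) :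
    LL (L / δ) f := by
  intro x hx y hy
  refine ⟨hδ.le.trans (hf x hx), ?_⟩
  have h1 := (abs_le.1 (hl x hx y hy)).2
  have h2 := Real.add_one_le_exp (L / δ * |x - y|)
  have h3 := hf y hy
  have h4 : 0 ≤ L * |x - y| := (abs_nonneg _).trans (hl x hx y hy)
  have h5 : L * |x - y| ≤ L / δ * |x - y| * f y := by
    have : L / δ * |x - y| * f y = L * |x - y| * (f y / δ) := by field_simp
    rw [this]
    exact le_mul_of_one_le_right h4 ((one_le_div hδ).2 h3)
  nlinarith

lemma LL.comp_mul {a c α : ℝ} {f g D : ℝ → ℝ} (hf : LL a f) (ha : 0 ≤ a)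
    (hg : MapsTo g (Icc (0:ℝ) 1) (Icc (0:ℝ) 1))
    (hgl : ∀ x ∈ Icc (0:ℝ) 1, ∀ y ∈ Icc (0:ℝ) 1, |g x - g y| ≤ α * |x - y|)
    (hD : LL c D) : LL (a * α + c) (fun x => f (g x) * D x) := by
  intro x hx y hy
  refine ⟨mul_nonneg (hf.nonneg (hg hx)) (hD.nonneg hx), ?_⟩
  have h1 := hf.le' ha (hg hx) (hg hy) (hgl x hx y hy)
  have h2 := hD.le hx hy
  calc f (g x) * D x ≤ (Real.exp (a * (α * |x - y|)) * f (g y)) *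
        (Real.exp (c * |x - y|) * D y) :=
        mul_le_mul h1 h2 (hD.nonneg hx) (mul_nonneg (Real.exp_pos _).le (hf.nonneg (hg hy)))
    _ = _ := by
      rw [show (a * α + c) * |x - y| = a * (α * |x - y|) + c * |x - y| by ring, Real.exp_add]
      ring

lemma LL.sum {a : ℝ} {F : ℕ → ℝ → ℝ} (s : Finset ℕ) (h : ∀ k ∈ s, LL a (F k)) :
    LL a (fun x => ∑ k ∈ s, F k x) := by
  intro x hx y hy
  refine ⟨Finset.sum_nonneg fun k hk => (h k hk).nonneg hx, ?_⟩
  rw [Finset.mul_sum]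
  exact Finset.sum_le_sum fun k hk => (h k hk).le hx hy

namespace NonlinearIFS

variable (S : NonlinearIFS)

lemma b_pos (k : ℕ) : 0 < S.b k := by
  have h1 : S.b (k + 1) < S.b k := S.b_anti (Nat.lt_succ_self k)
  have h2 : 0 ≤ S.b (k + 1) := S.b_anti.antitone.le_of_tendsto S.b_lim _
  linarith

lemma b_le_one (k : ℕ) : S.b k ≤ 1 := by
  rw [← S.b_zero]; exact S.b_anti.antitone (Nat.zero_le k)

lemma g_maps {k : ℕ} (hk : 1 ≤ k) : MapsTo (S.g k) (Icc (0:ℝ) 1) (Icc (S.b k) (S.b (k - 1))) := by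
  intro x hx
  rw [← S.g_image k hk]
  exact ⟨x, hx, rfl⟩

lemma g_mapsI {k : ℕ} (hk : 1 ≤ k) : MapsTo (S.g k) (Icc (0:ℝ) 1) (Icc (0:ℝ) 1) := by
  intro x hx
  have := S.g_maps hk hx
  exact ⟨(S.b_pos k).le.trans this.1, this.2.trans (S.b_le_one _)⟩

end NonlinearIFS

/-- constants of the system -/
structure Consts (S : NonlinearIFS) (c α : ℝ) : Prop where
  c_pos : 0 < c
  a_pos : 0 < α
  a_lt : α < 1
  dist : ∀ n, 1 ≤ n → ∀ x ∈ Icc (0:ℝ) 1, |S.g'' n x / S.g' n x| < c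
  contr : ∀ n, 1 ≤ n → ∀ x ∈ Icc (0:ℝ) 1, |S.g' n x| < α

lemma NonlinearIFS.exists_consts (S : NonlinearIFS) : ∃ c α, Consts S c α := by
  obtain ⟨c, hc, h1⟩ := S.N3
  obtain ⟨α, hα, h2⟩ := S.N5
  exact ⟨c, α, hc, (abs_nonneg _).trans_lt (h2 1 le_rfl 0 (by simp)), hα, h1, h2⟩

namespace Consts

variable {S : NonlinearIFS} {c α : ℝ} (hS : Consts S c α)
include hS

lemma g_lip {k : ℕ} (hk : 1 ≤ k) : ∀ x ∈ Icc (0:ℝ) 1, ∀ y ∈ Icc (0:ℝ) 1,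
    |S.g k x - S.g k y| ≤ α * |x - y| := by
  intro x hx y hy
  have := (convex_Icc (0:ℝ) 1).norm_image_sub_le_of_norm_hasDerivWithin_le
    (f := S.g k) (f' := S.g' k) (C := α)
    (fun x hx => (S.deriv1 k hk x hx).hasDerivWithinAt)
    (fun x hx => (hS.contr k hk x hx).le) hy hx
  simpa using this

lemma g'_LL {k : ℕ} (hk : 1 ≤ k) : LL c (fun x => |S.g' k x|) := by
  intro x hx y hy
  refine ⟨abs_nonneg _, ?_⟩
  have := (convex_Icc (0:ℝ) 1).norm_image_sub_le_of_norm_hasDerivWithin_le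
    (f := fun x => Real.log (S.g' k x)) (f' := fun x => S.g'' k x / S.g' k x) (C := c)
    (fun x hx => ((S.deriv2 k hk x hx).log (S.deriv_ne k hk x hx)).hasDerivWithinAt)
    (fun x hx => (hS.dist k hk x hx).le) hy hx
  have h2 := (abs_le.1 this).2
  rw [Real.norm_eq_abs] at h2
  have hx0 := abs_pos.2 (S.deriv_ne k hk x hx)
  have hy0 := abs_pos.2 (S.deriv_ne k hk y hy)
  rw [← Real.log_abs (S.g' k x), ← Real.log_abs (S.g' k y)] at h2
  calc |S.g' k x| = Real.exp (Real.log |S.g' k x|) := (Real.exp_log hx0).symm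
    _ ≤ Real.exp (c * |x - y| + Real.log |S.g' k y|) := Real.exp_le_exp.2 (by linarith)
    _ = _ := by rw [Real.exp_add, Real.exp_log hy0]


end Consts

/-- good composite maps -/
structure Good (a α : ℝ) (j : ℕ) (φ φ' : ℝ → ℝ) : Prop where
  maps : MapsTo φ (Icc (0:ℝ) 1) (Icc (0:ℝ) 1)
  der : ∀ x ∈ Icc (0:ℝ) 1, HasDerivAt φ (φ' x) x
  ne : ∀ x ∈ Icc (0:ℝ) 1, φ' x ≠ 0
  ll : LL a (fun x => |φ' x|)
  le : ∀ x ∈ Icc (0:ℝ) 1, |φ' x| ≤ α ^ j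

lemma Good.id {a : ℝ} (ha : 0 ≤ a) (α : ℝ) : Good a α 0 id (fun _ => 1) where
  maps := fun x hx => hx
  der := fun x _ => hasDerivAt_id x
  ne := by simp
  ll := by
    intro x _ y _
    simp only [abs_one, zero_le_one, mul_one, true_and]
    exact Real.one_le_exp (by positivity)
  le := by simp

lemma Good.comp {S : NonlinearIFS} {c α : ℝ} (hS : Consts S c α) {a : ℝ} (ha : 0 ≤ a)
    (hac : a * α + c ≤ a) {j : ℕ} {φ φ' : ℝ → ℝ} (h : Good a α j φ φ') {k : ℕ} (hk : 1 ≤ k) :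
    Good a α (j + 1) (fun x => φ (S.g k x)) (fun x => φ' (S.g k x) * S.g' k x) where
  maps := fun x hx => h.maps (S.g_mapsI hk hx)
  der := fun x hx => (h.der _ (S.g_mapsI hk hx)).comp x (S.deriv1 k hk x hx)
  ne := fun x hx => mul_ne_zero (h.ne _ (S.g_mapsI hk hx)) (S.deriv_ne k hk x hx)
  ll := by
    have := (h.ll.comp_mul ha (S.g_mapsI hk) (hS.g_lip hk) (hS.g'_LL hk)).mono hac
    simpa only [abs_mul] using this
  le := fun x hx => by
    rw [abs_mul, pow_succ]
    exact mul_le_mul (h.le _ (S.g_mapsI hk hx)) (hS.contr k hk x hx).le (abs_nonneg _)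
      (pow_nonneg hS.a_pos.le _)

lemma slope_eq {φ φ' : ℝ → ℝ} (h : ∀ x ∈ Icc (0:ℝ) 1, HasDerivAt φ (φ' x) x) {x y : ℝ}
    (hx : x ∈ Icc (0:ℝ) 1) (hy : y ∈ Icc (0:ℝ) 1) :
    ∃ z ∈ Icc (0:ℝ) 1, z ∈ uIcc x y ∧ |φ x - φ y| = |φ' z| * |x - y| := by
  wlog hxy : x < y generalizing x y
  · rcases eq_or_lt_of_le (not_lt.1 hxy) with rfl | h'
    · exact ⟨y, hx, by simp, by simp⟩
    · obtain ⟨z, hz, hz', he⟩ := this hy hx h'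
      exact ⟨z, hz, by rwa [uIcc_comm], by rw [abs_sub_comm, he, abs_sub_comm y x]⟩
  have hsub : ∀ z ∈ Icc x y, z ∈ Icc (0:ℝ) 1 := fun z hz => ⟨hx.1.trans hz.1, hz.2.trans hy.2⟩
  obtain ⟨z, hz, he⟩ := exists_hasDerivAt_eq_slope φ φ' hxy
    (fun z hz => (h z (hsub z hz)).continuousAt.continuousWithinAt)
    (fun z hz => h z (hsub z (Ioo_subset_Icc_self hz)))
  refine ⟨z, hsub z (Ioo_subset_Icc_self hz), ?_, ?_⟩
  · rw [uIcc_of_le hxy.le]; exact Ioo_subset_Icc_self hz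
  · have : φ y - φ x = φ' z * (y - x) := by
      rw [he]; field_simp [sub_ne_zero.2 hxy.ne']
    rw [abs_sub_comm, this, abs_mul, abs_sub_comm y x]

lemma Good.upper {a α : ℝ} (ha : 0 ≤ a) {j : ℕ} {φ φ' : ℝ → ℝ} (h : Good a α j φ φ') {x y : ℝ}
    (hx : x ∈ Icc (0:ℝ) 1) (hy : y ∈ Icc (0:ℝ) 1) :
    |φ x - φ y| ≤ (|φ' 0| * Real.exp a) * |x - y| := by
  obtain ⟨z, hz, -, he⟩ := slope_eq h.der hx hy
  rw [he]
  have := h.ll.bound ha hz (show (0:ℝ) ∈ Icc (0:ℝ) 1 by simp)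
  exact mul_le_mul_of_nonneg_right (by linarith) (abs_nonneg _)

lemma Good.lower {a α : ℝ} (ha : 0 ≤ a) {j : ℕ} {φ φ' : ℝ → ℝ} (h : Good a α j φ φ') {x y : ℝ}
    (hx : x ∈ Icc (0:ℝ) 1) (hy : y ∈ Icc (0:ℝ) 1) :
    (|φ' 0| / Real.exp a) * |x - y| ≤ |φ x - φ y| := by
  obtain ⟨z, hz, -, he⟩ := slope_eq h.der hx hy
  rw [he]
  have := h.ll.bound ha (show (0:ℝ) ∈ Icc (0:ℝ) 1 by simp) hz
  refine mul_le_mul_of_nonneg_right ?_ (abs_nonneg _)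
  rw [div_le_iff₀ (Real.exp_pos a)]
  linarith

lemma Good.injOn {a α : ℝ} (ha : 0 ≤ a) {j : ℕ} {φ φ' : ℝ → ℝ} (h : Good a α j φ φ') :
    InjOn φ (Icc (0:ℝ) 1) := by
  intro x hx y hy hxy
  have := h.lower ha hx hy
  rw [hxy, sub_self, abs_zero] at this
  have h0 : 0 < |φ' 0| / Real.exp a := div_pos (abs_pos.2 (h.ne 0 (by simp))) (Real.exp_pos a)
  have h1 : |x - y| ≤ 0 := by
    by_contra hcon
    push Not at hcon
    nlinarith
  exact sub_eq_zero.1 (abs_nonpos_iff.1 h1)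

namespace NonlinearIFS

variable (S : NonlinearIFS) (n : ℕ)

/-- level sets -/
def lev (l : ℕ) : Set ℝ :=
  ⋃ w ∈ {w : List ℕ | w.length = l + 1 ∧ ∀ i ∈ w, 1 ≤ i ∧ i ≤ n},
    wordComp S.g w '' Set.Icc (0 : ℝ) 1

lemma mem_lev {l : ℕ} {x : ℝ} : x ∈ S.lev n l ↔ ∃ w : List ℕ, (w.length = l + 1 ∧
    ∀ i ∈ w, 1 ≤ i ∧ i ≤ n) ∧ x ∈ wordComp S.g w '' Set.Icc (0 : ℝ) 1 := by
  simp only [lev, mem_iUnion, mem_ofPred_eq, exists_prop]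

lemma mem_J {x : ℝ} : x ∈ limitSet S.g n ↔ ∀ l, x ∈ S.lev n l := by
  simp only [limitSet, mem_iInter]; rfl

lemma lev_zero : S.lev n 0 = ⋃ k ∈ Icc 1 n, S.g k '' Icc (0:ℝ) 1 := by
  ext x
  rw [mem_lev]
  simp only [mem_iUnion, exists_prop]
  constructor
  · rintro ⟨w, ⟨h1, h2⟩, y, hy, rfl⟩
    obtain ⟨k, rfl⟩ := List.length_eq_one_iff.1 h1
    exact ⟨k, h2 k (by simp), y, hy, rfl⟩
  · rintro ⟨k, hk, y, hy, rfl⟩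
    exact ⟨[k], ⟨rfl, by simpa using hk⟩, y, hy, rfl⟩

lemma lev_succ (l : ℕ) : S.lev n (l + 1) = ⋃ k ∈ Icc 1 n, S.g k '' S.lev n l := by
  ext x
  rw [mem_lev]
  simp only [mem_iUnion, exists_prop]
  constructor
  · rintro ⟨w, ⟨h1, h2⟩, y, hy, rfl⟩
    match w, h1, h2 with
    | k :: w, h1, h2 =>
      refine ⟨k, h2 k (by simp), wordComp S.g w y, ?_, rfl⟩
      rw [mem_lev]
      exact ⟨w, ⟨by simpa using h1, fun i hi => h2 i (by simp [hi])⟩, y, hy, rfl⟩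
  · rintro ⟨k, hk, z, hz, rfl⟩
    rw [mem_lev] at hz
    obtain ⟨w, ⟨h1, h2⟩, y, hy, rfl⟩ := hz
    refine ⟨k :: w, ⟨by simp [h1], ?_⟩, y, hy, rfl⟩
    intro i hi
    rcases List.mem_cons.1 hi with rfl | hi
    · exact hk
    · exact h2 i hi

lemma g_contI {k : ℕ} (hk : 1 ≤ k) : ContinuousOn (S.g k) (Icc (0:ℝ) 1) :=
  fun x hx => (S.deriv1 k hk x hx).continuousAt.continuousWithinAt

lemma lev_sub (l : ℕ) : S.lev n l ⊆ Icc (0:ℝ) 1 := by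
  induction l with
  | zero =>
    rw [lev_zero]
    exact iUnion₂_subset fun k hk => (S.g_mapsI hk.1).image_subset
  | succ l ih =>
    rw [lev_succ]
    exact iUnion₂_subset fun k hk => ((S.g_mapsI hk.1).mono_left ih).image_subset

lemma lev_compact (l : ℕ) : IsCompact (S.lev n l) := by
  induction l with
  | zero =>
    rw [lev_zero]
    exact (finite_Icc 1 n).isCompact_biUnion
      fun k hk => isCompact_Icc.image_of_continuousOn (S.g_contI hk.1)
  | succ l ih =>
    rw [lev_succ]
    exact (finite_Icc 1 n).isCompact_biUnion
      fun k hk => ih.image_of_continuousOn ((S.g_contI hk.1).mono (S.lev_sub n l))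

lemma lev_anti : Antitone (S.lev n) := by
  refine antitone_nat_of_succ_le fun l => ?_
  induction l with
  | zero =>
    rw [lev_succ, S.lev_zero n]
    refine iUnion₂_mono fun k hk => image_mono ?_
    rw [← lev_zero]; exact S.lev_sub n 0
  | succ l ih =>
    rw [S.lev_succ n (l + 1)]
    conv_rhs => rw [S.lev_succ n l]
    exact iUnion₂_mono fun k hk => image_mono ih

lemma J_eq : limitSet S.g n = ⋂ l, S.lev n l := rfl

lemma J_compact : IsCompact (limitSet S.g n) := by
  rw [J_eq]
  exact (S.lev_compact n 0).of_isClosed_subset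
    (isClosed_iInter fun l => (S.lev_compact n l).isClosed) (iInter_subset _ 0)

lemma J_sub : limitSet S.g n ⊆ Icc (S.b n) 1 := by
  intro x hx
  have h := (S.mem_J n).1 hx 0
  rw [lev_zero] at h
  simp only [mem_iUnion, exists_prop] at h
  obtain ⟨k, hk, y, hy, rfl⟩ := h
  have := S.g_maps hk.1 hy
  exact ⟨(S.b_anti.antitone hk.2).trans this.1, this.2.trans (S.b_le_one _)⟩

lemma J_subI : limitSet S.g n ⊆ Icc (0:ℝ) 1 :=
  (S.J_sub n).trans (Icc_subset_Icc_left (S.b_pos n).le)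

lemma J_maps {k : ℕ} (hk : k ∈ Icc 1 n) : MapsTo (S.g k) (limitSet S.g n) (limitSet S.g n) := by
  intro x hx
  rw [mem_J] at hx ⊢
  intro l
  refine S.lev_anti n (Nat.le_succ l) ?_
  rw [lev_succ]
  exact mem_iUnion₂.2 ⟨k, hk, x, hx l, rfl⟩

lemma J_cover {x : ℝ} (hx : x ∈ limitSet S.g n) :
    ∃ k ∈ Icc 1 n, x ∈ S.g k '' limitSet S.g n := by
  rw [mem_J] at hx
  have h1 : ∃ k ∈ Icc 1 n, ∀ l, x ∈ S.g k '' S.lev n l := by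
    by_contra hcon
    push Not at hcon
    choose! L hL using hcon
    have h2 := hx ((Finset.Icc 1 n).sup L + 1)
    rw [lev_succ] at h2
    simp only [mem_iUnion, exists_prop] at h2
    obtain ⟨k, hk, hxk⟩ := h2
    refine hL k hk (image_mono (S.lev_anti n ?_) hxk)
    exact Finset.le_sup (f := L) (Finset.mem_Icc.2 hk)
  obtain ⟨k, hk, hxk⟩ := h1
  obtain ⟨y, hy, hyx⟩ := hxk 0
  refine ⟨k, hk, y, ?_, hyx⟩
  rw [mem_J]
  intro l
  obtain ⟨z, hz, hzx⟩ := hxk l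
  have : z = y := (S.g_anti k hk.1).injOn (S.lev_sub n l hz) (S.lev_sub n 0 hy) (hzx.trans hyx.symm)
  rwa [← this]

lemma J_disj {k l : ℕ} (hk : k ∈ Icc 1 n) (hl : l ∈ Icc 1 n) (hkl : k ≠ l) :
    Disjoint (S.g k '' limitSet S.g n) (S.g l '' limitSet S.g n) := by
  wlog h : k < l generalizing k l
  · exact (this hl hk hkl.symm (by omega)).symm
  rw [Set.disjoint_left]
  rintro _ ⟨x, hx, rfl⟩ ⟨y, hy, hxy⟩
  have h1 := S.g_maps hk.1 (S.J_subI n hx)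
  have h2 : S.g l y < S.g l 0 := S.g_anti l hl.1 (by simp) (S.J_subI n hy)
    ((S.b_pos n).trans_le (S.J_sub n hy).1)
  rw [S.g_zero l hl.1] at h2
  have h3 : S.b (l - 1) ≤ S.b k := S.b_anti.antitone (by omega)
  linarith [h1.1]

end NonlinearIFS

/-- the level `j` family -/
lemma level_family {S : NonlinearIFS} {c α : ℝ} (hS : Consts S c α) {a : ℝ} (ha : 0 ≤ a)
    (hac : a * α + c ≤ a) (n : ℕ) (hn : 2 ≤ n)
    (hJ : (limitSet S.g n).Nonempty) (j : ℕ) :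
    ∃ (ι : Type) (_ : Fintype ι) (φ φ' : ι → ℝ → ℝ), (1 ≤ j → Nontrivial ι) ∧
      (∀ i, Good a α j (φ i) (φ' i)) ∧ (∀ i, MapsTo (φ i) (limitSet S.g n) (limitSet S.g n)) ∧
      (∀ x ∈ limitSet S.g n, ∃ i, x ∈ φ i '' limitSet S.g n) ∧
      (∀ i i', i ≠ i' → Disjoint (φ i '' limitSet S.g n) (φ i' '' limitSet S.g n)) := by
  induction j with
  | zero =>
    refine ⟨Unit, inferInstance, fun _ => id, fun _ _ => 1, by simp, fun _ => Good.id ha α,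
      fun _ x hx => hx, fun x hx => ⟨(), x, hx, rfl⟩, fun i i' h => absurd rfl h⟩
  | succ j ih =>
    obtain ⟨ι, hι, φ, φ', -, hg, hm, hc, hd⟩ := ih
    obtain ⟨x0, hx0⟩ := hJ
    obtain ⟨i0, -⟩ := hc x0 hx0
    refine ⟨ι × Icc 1 n, inferInstance, fun p x => φ p.1 (S.g p.2 x),
      fun p x => φ' p.1 (S.g p.2 x) * S.g' p.2 x, ?_, fun p => (hg p.1).comp hS ha hac p.2.2.1,
      fun p x hx => hm p.1 (S.J_maps n p.2.2 hx), ?_, ?_⟩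
    · intro _
      refine ⟨(i0, ⟨1, by simp; omega⟩), (i0, ⟨2, by simp; omega⟩), ?_⟩
      simp
    · intro x hx
      obtain ⟨i, y, hy, rfl⟩ := hc x hx
      obtain ⟨k, hk, z, hz, rfl⟩ := S.J_cover n hy
      exact ⟨(i, ⟨k, hk⟩), z, hz, rfl⟩
    · rintro ⟨i, k⟩ ⟨i', k'⟩ hne
      rw [Set.disjoint_left]
      rintro _ ⟨x, hx, rfl⟩ ⟨y, hy, hxy⟩
      simp only at hxy
      by_cases hii : i = i'
      · subst hii
        have hkk : (k : ℕ) ≠ k' := by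
          intro h
          exact hne (by rw [Subtype.ext h])
        have h1 := (hg i).injOn ha (S.J_subI n (S.J_maps n k'.2 hy))
          (S.J_subI n (S.J_maps n k.2 hx)) hxy
        exact Set.disjoint_left.1 (S.J_disj n k.2 k'.2 hkk) ⟨x, hx, rfl⟩ ⟨y, hy, h1⟩
      · exact Set.disjoint_left.1 (hd i i' hii) ⟨_, S.J_maps n k.2 hx, rfl⟩
          ⟨_, S.J_maps n k'.2 hy, hxy⟩

lemma locate {S : NonlinearIFS} {c α : ℝ} (hS : Consts S c α) {a : ℝ} (ha : 0 ≤ a)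
    (hac : a * α + c ≤ a) (n : ℕ) {δ : ℝ} (hδ : 0 < δ) (hδ1 : δ ≤ 1)
    (hgap : ∀ k ∈ Icc 1 n, ∀ l ∈ Icc 1 n, k ≠ l → ∀ x ∈ S.g k '' limitSet S.g n,
      ∀ y ∈ S.g l '' limitSet S.g n, δ < |x - y|)
    (U : Set ℝ) (hU : U ⊆ limitSet S.g n) (d : ℝ) (hd : 0 < d)
    (hUd : ∀ x ∈ U, ∀ y ∈ U, |x - y| ≤ d) :
    ∃ (φ φ' : ℝ → ℝ) (j : ℕ), Good a α j φ φ' ∧ U ⊆ φ '' limitSet S.g n ∧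
      |φ' 0| * δ ≤ Real.exp a * d := by
  have h0 : (0:ℝ) ∈ Icc (0:ℝ) 1 := by simp
  by_contra hcon
  push Not at hcon
  have key : ∀ m : ℕ, ∃ φ φ' : ℝ → ℝ, Good a α m φ φ' ∧ U ⊆ φ '' limitSet S.g n := by
    intro m
    induction m with
    | zero => exact ⟨id, fun _ => 1, Good.id ha α, by simpa using hU⟩
    | succ m ih =>
      obtain ⟨φ, φ', hg, hUφ⟩ := ih
      have h1 := hcon φ φ' m hg hUφ
      rcases U.eq_empty_or_nonempty with rfl | ⟨u, hu⟩
      · by_cases hn : 1 ≤ n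
        · exact ⟨_, _, hg.comp hS ha hac (le_refl 1), by simp⟩
        · exact ⟨_, _, hg.comp hS ha hac (le_refl 1), by simp⟩
      obtain ⟨x, hx, rfl⟩ := hUφ hu
      obtain ⟨k, hk, hxk⟩ := S.J_cover n hx
      refine ⟨_, _, hg.comp hS ha hac hk.1, ?_⟩
      intro v hv
      obtain ⟨y, hy, rfl⟩ := hUφ hv
      obtain ⟨l, hl, hyl⟩ := S.J_cover n hy
      by_cases hkl : k = l
      · subst hkl
        obtain ⟨z, hz, rfl⟩ := hyl
        exact ⟨z, hz, rfl⟩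
      · exfalso
        have h2 := hgap k hk l hl hkl x hxk y hyl
        have h3 := hg.lower ha (S.J_subI n hx) (S.J_subI n hy)
        have h4 := hUd _ hu _ hv
        have h5 : |φ' 0| / Real.exp a * |x - y| ≤ d := h3.trans h4
        rw [div_mul_eq_mul_div, div_le_iff₀ (Real.exp_pos a)] at h5
        nlinarith [abs_nonneg (φ' 0)]
  obtain ⟨m, hm⟩ := exists_pow_lt_of_lt_one hd hS.a_lt
  obtain ⟨φ, φ', hg, hUφ⟩ := key m
  have h1 := hcon φ φ' m hg hUφ
  have h2 := hg.le 0 h0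
  have h3 : 1 ≤ Real.exp a := Real.one_le_exp ha
  nlinarith [abs_nonneg (φ' 0)]

lemma J_ne_top {S : NonlinearIFS} {c α : ℝ} (hS : Consts S c α) {a : ℝ} (ha : 0 ≤ a)
    (hac : a * α + c ≤ a) (n : ℕ) (hn : 2 ≤ n) (hh : 0 < S.h n)
    (hJ : (limitSet S.g n).Nonempty) : μH[S.h n] (limitSet S.g n) ≠ ⊤ := by
  set J := limitSet S.g n with hJdef
  have hA : 0 < Real.exp a := Real.exp_pos a
  choose ι hι φ φ' hnt hg hm hc hd using level_family hS ha hac n hn hJ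
  have hρ : ∀ j i, 0 < |φ' j i 0| := fun j i => abs_pos.2 ((hg j i).ne 0 (by simp))
  by_cases H : ∃ j, 1 ≤ j ∧ 1 < ∑ i, (|φ' j i 0| / Real.exp a) ^ (S.h n)
  · exfalso
    obtain ⟨j, hj, hs⟩ := H
    have hcont : Continuous fun t : ℝ => ∑ i, (|φ' j i 0| / Real.exp a) ^ t :=
      continuous_finsetSum _ fun i _ => Real.continuous_const_rpow (div_pos (hρ j i) hA).ne'
    have hev := (hcont.tendsto (S.h n)).eventually (lt_mem_nhds hs)
    obtain ⟨t, ht1, ht2⟩ := ((hev.filter_mono nhdsWithin_le_nhds).and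
      (self_mem_nhdsWithin (s := Ioi (S.h n)))).exists
    have ht2 : S.h n < t := ht2
    have ht : 0 < t := hh.trans ht2
    have := hnt j hj
    have h1 := hm_ne_zero_of_expanding J (S.J_compact n) hJ (φ j)
      (fun i => |φ' j i 0| / Real.exp a) (fun i => div_pos (hρ j i) hA)
      (fun i x hx => ((hg j i).der x (S.J_subI n hx)).continuousAt.continuousWithinAt) (hm j)
      (fun i x hx y hy => (hg j i).lower ha (S.J_subI n hx) (S.J_subI n hy))
      (hd j) t ht ht1.le
    have h2 := le_dimH_of_hausdorffMeasure_ne_zero (d := ⟨t, ht.le⟩) h1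
    rw [S.h_dim n (by omega)] at h2
    have h3 : ENNReal.ofReal t ≤ ENNReal.ofReal (S.h n) := by
      rw [ENNReal.ofReal_eq_coe_nnreal ht.le]; exact h2
    rw [ENNReal.ofReal_le_ofReal_iff hh.le] at h3
    linarith
  · push Not at H
    refine ne_top_of_le_ne_top ENNReal.ofReal_ne_top
      (hm_le_of_covers J (S.h n) hh ((Real.exp a * Real.exp a) ^ S.h n) ?_)
    intro η hη
    obtain ⟨m, hm'⟩ := exists_pow_lt_of_lt_one (div_pos hη hA) hS.a_lt
    have hm1 : α ^ (m + 1) * Real.exp a ≤ η := by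
      rw [← le_div_iff₀ hA]
      exact (pow_le_pow_of_le_one hS.a_pos.le hS.a_lt.le (Nat.le_succ m)).trans hm'.le
    refine ⟨ι (m + 1), hι (m + 1), fun i => φ (m + 1) i '' J,
      fun i => |φ' (m + 1) i 0| * Real.exp a, fun i => ⟨by positivity, ?_⟩, ?_, ?_, ?_⟩
    · exact (mul_le_mul_of_nonneg_right ((hg (m + 1) i).le 0 (by simp)) hA.le).trans hm1
    · rintro i _ ⟨x, hx, rfl⟩ _ ⟨y, hy, rfl⟩
      refine ((hg (m + 1) i).upper ha (S.J_subI n hx) (S.J_subI n hy)).trans ?_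
      exact mul_le_of_le_one_right (by positivity)
        (abs_sub_le_one (S.J_subI n hx) (S.J_subI n hy))
    · intro x hx
      obtain ⟨i, hi⟩ := hc (m + 1) x hx
      exact mem_iUnion.2 ⟨i, hi⟩
    · have h1 : ∀ i, (|φ' (m + 1) i 0| * Real.exp a) ^ S.h n =
          (Real.exp a * Real.exp a) ^ S.h n * (|φ' (m + 1) i 0| / Real.exp a) ^ S.h n := by
        intro i
        rw [← Real.mul_rpow (by positivity) (by positivity)]
        congr 1
        field_simp
      simp_rw [h1]
      rw [← Finset.mul_sum]
      exact mul_le_of_le_one_right (by positivity) (H (m + 1) (by omega))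

lemma J_ne_zero {S : NonlinearIFS} {c α : ℝ} (hS : Consts S c α) {a : ℝ} (ha : 0 ≤ a)
    (hac : a * α + c ≤ a) (n : ℕ) (hn : 2 ≤ n) (hh : 0 < S.h n) :
    μH[S.h n] (limitSet S.g n) ≠ 0 := by
  intro hzero
  set J := limitSet S.g n with hJdef
  have hA : 0 < Real.exp a := Real.exp_pos a
  obtain ⟨δ, hδ, hδ1, hgap⟩ := exists_gap (fun k : Icc 1 n => S.g k '' J)
    (fun k => (S.J_compact n).image_of_continuousOn ((S.g_contI k.2.1).mono (S.J_subI n)))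
    (fun k l hkl => S.J_disj n k.2 l.2 (fun h => hkl (Subtype.ext h)))
  set C := Real.exp a * Real.exp a / δ with hC
  have hC0 : 0 < C := by positivity
  obtain ⟨s, U, d, hd, hU, hc, hs⟩ := exists_cover_of_hm_zero J (S.J_compact n) (S.h n) hh hzero
    ((C⁻¹) ^ S.h n) (by positivity)
  have hloc := fun i => locate hS ha hac n hδ hδ1
    (fun k hk l hl hkl => hgap ⟨k, hk⟩ ⟨l, hl⟩ (by simpa using hkl)) (U i ∩ J)
    inter_subset_right (d i) (hd i) (fun x hx y hy => hU i x hx.1 y hy.1)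
  choose φ φ' j hg hUφ hle using hloc
  have hρ : ∀ i, 0 < |φ' i 0| := fun i => abs_pos.2 ((hg i).ne 0 (by simp))
  have hR : ∀ i, |φ' i 0| * Real.exp a ≤ C * d i := by
    intro i
    rw [hC, div_mul_eq_mul_div, le_div_iff₀ hδ]
    nlinarith [hle i]
  have hsum : ∑ i : s, (|φ' i 0| * Real.exp a) ^ S.h n < 1 := by
    rw [Finset.sum_coe_sort s (fun i => (|φ' i 0| * Real.exp a) ^ S.h n)]
    calc _ ≤ ∑ i ∈ s, C ^ S.h n * d i ^ S.h n := by
          refine Finset.sum_le_sum fun i _ => ?_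
          rw [← Real.mul_rpow hC0.le (hd i).le]
          exact Real.rpow_le_rpow (mul_pos (hρ i) hA).le (hR i) hh.le
      _ = C ^ S.h n * ∑ i ∈ s, d i ^ S.h n := by rw [Finset.mul_sum]
      _ < C ^ S.h n * (C⁻¹) ^ S.h n := mul_lt_mul_of_pos_left hs (by positivity)
      _ = 1 := by
        rw [← Real.mul_rpow hC0.le (by positivity), mul_inv_cancel₀ hC0.ne', Real.one_rpow]
  have hcont : Continuous fun t : ℝ => ∑ i : s, (|φ' i 0| * Real.exp a) ^ t :=
    continuous_finsetSum _ fun i _ => Real.continuous_const_rpow (mul_pos (hρ i) hA).ne'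
  have hev := (hcont.tendsto (S.h n)).eventually (gt_mem_nhds hsum)
  obtain ⟨t, ⟨ht1, ht0⟩, ht2⟩ := (((hev.and (lt_mem_nhds hh)).filter_mono nhdsWithin_le_nhds).and
      (self_mem_nhdsWithin (s := Iio (S.h n)))).exists
  have ht2 : t < S.h n := ht2
  have h1 := hm_zero_of_contractions J (S.J_subI n) (fun i : s => φ i)
    (fun i => |φ' i 0| * Real.exp a) (fun i => (mul_pos (hρ i) hA).le)
    (fun i x hx y hy => (hg i).upper ha (S.J_subI n hx) (S.J_subI n hy))
    (fun x hx => by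
      have h1 := hc hx
      simp only [mem_iUnion, exists_prop] at h1
      obtain ⟨i, hi, hxi⟩ := h1
      exact mem_iUnion.2 ⟨⟨i, hi⟩, hUφ i ⟨hxi, hx⟩⟩) t ht0 ht1
  have h2 := dimH_le_of_hausdorffMeasure_ne_top (s := J) (d := ⟨t, ht0.le⟩)
    (by have h5 : μH[t] J ≠ ⊤ := by { rw [h1]; simp }
        exact h5)
  rw [S.h_dim n (by omega)] at h2
  have h3 : ENNReal.ofReal (S.h n) ≤ ENNReal.ofReal t := by
    rw [ENNReal.ofReal_eq_coe_nnreal ht0.le]; exact h2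
  rw [ENNReal.ofReal_le_ofReal_iff ht0.le] at h3
  linarith

lemma J_nonempty (S : NonlinearIFS) (n : ℕ) (hn : 1 ≤ n) (hh : 0 < S.h n) :
    (limitSet S.g n).Nonempty := by
  rw [nonempty_iff_ne_empty]
  intro h
  have := S.h_dim n hn
  rw [h, dimH_empty] at this
  have h2 := ENNReal.ofReal_pos.2 hh
  rw [← this] at h2
  exact lt_irrefl _ h2

lemma h_le_one (S : NonlinearIFS) (n : ℕ) (hn : 1 ≤ n) : S.h n ≤ 1 := by
  have h1 : dimH (limitSet S.g n) ≤ 1 := by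
    rw [← Real.dimH_univ]; exact dimH_mono (subset_univ _)
  rw [S.h_dim n hn] at h1
  exact ENNReal.ofReal_le_one.1 h1

lemma h_pos_eventually (S : NonlinearIFS) : ∀ᶠ n : ℕ in atTop, 2 ≤ n ∧ 0 < S.h n := by
  have h1 := S.N1.eventually (gt_mem_nhds (show (0:ℝ) < 1 by norm_num))
  have h2 := (Real.tendsto_log_atTop.comp tendsto_natCast_atTop_atTop).eventually
    (eventually_ge_atTop (1:ℝ))
  filter_upwards [h1, h2, eventually_ge_atTop 2] with n h1 h2 h3
  refine ⟨h3, ?_⟩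
  by_contra hcon
  simp only [Function.comp] at h2
  nlinarith

lemma hm_image_ge (g : ℝ → ℝ) (B : Set ℝ) {r h : ℝ} (hr : 0 < r) (hr1 : r ≤ 1) (hh : 0 < h)
    (hh1 : h ≤ 1) (hg : ∀ x ∈ B, ∀ y ∈ B, r * |x - y| ≤ |g x - g y|) :
    ENNReal.ofReal r * μH[h] B ≤ μH[h] (g '' B) := by
  have hinj : InjOn g B := by
    intro x hx y hy hxy
    have := hg x hx y hy
    rw [hxy, sub_self, abs_zero] at this
    have h1 : |x - y| ≤ 0 := by
      by_contra hcon
      push Not at hcon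
      nlinarith
    exact sub_eq_zero.1 (abs_nonpos_iff.1 h1)
  set ρ := r.toNNReal with hρ
  have hρr : (ρ : ℝ) = r := Real.coe_toNNReal r hr.le
  have hρ0 : 0 < ρ := Real.toNNReal_pos.2 hr
  have hρ1 : ρ ≤ 1 := by rw [← NNReal.coe_le_coe, hρr]; exact hr1
  have hL : LipschitzOnWith ρ⁻¹ (Function.invFunOn g B) (g '' B) := by
    refine LipschitzOnWith.of_dist_le_mul ?_
    rintro _ ⟨x, hx, rfl⟩ _ ⟨y, hy, rfl⟩
    rw [hinj.leftInvOn_invFunOn hx, hinj.leftInvOn_invFunOn hy, Real.dist_eq, Real.dist_eq,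
      NNReal.coe_inv, hρr, inv_mul_eq_div, le_div_iff₀ hr, mul_comm]
    exact hg x hx y hy
  have h1 := hL.hausdorffMeasure_image_le hh.le
  rw [hinj.leftInvOn_invFunOn.image_image] at h1
  have h2 : ((ρ⁻¹ : NNReal) : ENNReal) ^ h ≤ ((ρ⁻¹ : NNReal) : ENNReal) := by
    have h3 : (1 : ENNReal) ≤ ((ρ⁻¹ : NNReal) : ENNReal) := by
      rw [ENNReal.one_le_coe_iff]
      exact (one_le_inv₀ hρ0).2 hρ1
    calc _ ≤ ((ρ⁻¹ : NNReal) : ENNReal) ^ (1:ℝ) := ENNReal.rpow_le_rpow_of_exponent_le h3 hh1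
      _ = _ := ENNReal.rpow_one _
  calc ENNReal.ofReal r * μH[h] B ≤ (ρ : ENNReal) * (((ρ⁻¹ : NNReal) : ENNReal) * μH[h] (g '' B)) :=
        mul_le_mul' le_rfl (h1.trans (mul_le_mul' h2 le_rfl))
    _ = μH[h] (g '' B) := by
      rw [← mul_assoc, ← ENNReal.coe_mul, mul_inv_cancel₀ hρ0.ne', ENNReal.coe_one, one_mul]

lemma conf_interval {S : NonlinearIFS} {c α : ℝ} (hS : Consts S c α) {k : ℕ} (hk : 1 ≤ k)
    {a : ℝ} (ha : 0 ≤ a) {f : ℝ → ℝ} (hf : LL a f) {h : ℝ} (hh : 0 < h) (hh1 : h ≤ 1)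
    (J : Set ℝ) (hJm : MeasurableSet J) (hJ : J ⊆ Icc (0:ℝ) 1) (m : ℕ) :
    ∀ (u ℓ : ℝ), 0 ≤ ℓ →
    ENNReal.ofReal (Real.exp (-(2 * (a + c) * ℓ / 2 ^ m))) *
      ∫⁻ x in J ∩ Ico u (u + ℓ), ENNReal.ofReal (f (S.g k x) * |S.g' k x|) ∂(μH[h]) ≤
    ∫⁻ x in S.g k '' (J ∩ Ico u (u + ℓ)), ENNReal.ofReal (f x) ∂(μH[h]) := by
  have himg : ∀ u v, MeasurableSet (S.g k '' (J ∩ Ico u v)) := fun u v =>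
    (hJm.inter measurableSet_Ico).image_of_continuousOn_injOn
      ((S.g_contI hk).mono (inter_subset_left.trans hJ))
      ((S.g_anti k hk).injOn.mono (inter_subset_left.trans hJ))
  have hc := hS.c_pos
  induction m with
  | zero =>
    intro u ℓ hℓ
    set B := J ∩ Ico u (u + ℓ) with hB
    have hBm : MeasurableSet B := hJm.inter measurableSet_Ico
    rcases B.eq_empty_or_nonempty with he | ⟨x0, hx0⟩
    · simp [he]
    have hBI : ∀ x ∈ B, x ∈ Icc (0:ℝ) 1 := fun x hx => hJ hx.1
    have hI0 := hBI x0 hx0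
    set G := f (S.g k x0) with hG
    set D := |S.g' k x0| with hD
    have hG0 : 0 ≤ G := hf.nonneg (S.g_mapsI hk hI0)
    have hD0 : 0 < D := abs_pos.2 (S.deriv_ne k hk x0 hI0)
    have hdist : ∀ x ∈ Ico u (u + ℓ), |x - x0| ≤ ℓ := by
      intro x hx
      rw [abs_le]; constructor <;> linarith [hx.1, hx.2, hx0.2.1, hx0.2.2]
    have hgl : ∀ x ∈ B, |S.g k x - S.g k x0| ≤ ℓ := by
      intro x hx
      have h1 := hS.g_lip hk x (hBI x hx) x0 hI0
      have h2 := hdist x hx.2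
      nlinarith [abs_nonneg (x - x0), hS.a_lt]
    -- upper bound
    have hup : ∫⁻ x in B, ENNReal.ofReal (f (S.g k x) * |S.g' k x|) ∂(μH[h]) ≤
        ENNReal.ofReal (Real.exp ((a + c) * ℓ) * (G * D)) * μH[h] B := by
      rw [← setLIntegral_const]
      refine setLIntegral_mono' hBm fun x hx => ENNReal.ofReal_le_ofReal ?_
      have h1 := hf.le' ha (S.g_mapsI hk (hBI x hx)) (S.g_mapsI hk hI0) (hgl x hx)
      have h2 := (hS.g'_LL hk).le' hc.le (hBI x hx) hI0 (hdist x hx.2)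
      calc f (S.g k x) * |S.g' k x| ≤ (Real.exp (a * ℓ) * G) * (Real.exp (c * ℓ) * D) :=
            mul_le_mul h1 h2 (abs_nonneg _) (by positivity)
        _ = _ := by rw [add_mul, Real.exp_add]; ring
    -- lower bound
    have hr : 0 < Real.exp (-(c * ℓ)) * D := by positivity
    have hr1 : Real.exp (-(c * ℓ)) * D ≤ 1 := by
      have h1 : Real.exp (-(c * ℓ)) ≤ 1 := Real.exp_le_one_iff.2 (by nlinarith)
      have h2 := (hS.contr k hk x0 hI0).le.trans hS.a_lt.le
      nlinarith [Real.exp_pos (-(c * ℓ))]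
    have hlow : ENNReal.ofReal (Real.exp (-(a * ℓ)) * G) * μH[h] (S.g k '' B) ≤
        ∫⁻ x in S.g k '' B, ENNReal.ofReal (f x) ∂(μH[h]) := by
      rw [← setLIntegral_const]
      refine setLIntegral_mono' (himg _ _) ?_
      rintro _ ⟨x, hx, rfl⟩
      refine ENNReal.ofReal_le_ofReal ?_
      have h1 := hf.le' ha (S.g_mapsI hk hI0) (S.g_mapsI hk (hBI x hx))
        ((abs_sub_comm _ _).trans_le (hgl x hx))
      rw [Real.exp_neg, inv_mul_eq_div, div_le_iff₀ (Real.exp_pos _)]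
      linarith
    have himage := hm_image_ge (S.g k) B hr hr1 hh hh1 (by
      intro x hx y hy
      obtain ⟨z, hz, hzxy, he⟩ := slope_eq (S.deriv1 k hk) (hBI x hx) (hBI y hy)
      rw [he]
      refine mul_le_mul_of_nonneg_right ?_ (abs_nonneg _)
      have hzI : z ∈ Ico u (u + ℓ) := ordConnected_Ico.uIcc_subset hx.2 hy.2 hzxy
      have h2 := (hS.g'_LL hk).le' hc.le hI0 hz ((abs_sub_comm _ _).trans_le (hdist z hzI))
      rw [Real.exp_neg, inv_mul_eq_div, div_le_iff₀ (Real.exp_pos _)]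
      linarith)
    calc _ ≤ ENNReal.ofReal (Real.exp (-(2 * (a + c) * ℓ / 2 ^ 0))) *
          (ENNReal.ofReal (Real.exp ((a + c) * ℓ) * (G * D)) * μH[h] B) := mul_le_mul' le_rfl hup
      _ = ENNReal.ofReal (Real.exp (-(a * ℓ)) * G) *
          (ENNReal.ofReal (Real.exp (-(c * ℓ)) * D) * μH[h] B) := by
        rw [← mul_assoc, ← ENNReal.ofReal_mul (by positivity),
          ← mul_assoc (ENNReal.ofReal (Real.exp (-(a * ℓ)) * G)),
          ← ENNReal.ofReal_mul (by positivity)]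
        congr 2
        rw [← mul_assoc, ← Real.exp_add]
        rw [show -(2 * (a + c) * ℓ / 2 ^ 0) + (a + c) * ℓ = -(a * ℓ) + -(c * ℓ) by ring,
          Real.exp_add]
        ring
      _ ≤ _ := (mul_le_mul' le_rfl himage).trans hlow
  | succ m ih =>
    intro u ℓ hℓ
    have h1 := ih u (ℓ / 2) (by positivity)
    have h2 := ih (u + ℓ / 2) (ℓ / 2) (by positivity)
    have e1 : u + ℓ / 2 + ℓ / 2 = u + ℓ := by ring
    rw [e1] at h2
    have e2 : 2 * (a + c) * (ℓ / 2) / 2 ^ m = 2 * (a + c) * ℓ / 2 ^ (m + 1) := by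
      rw [pow_succ]; field_simp
    rw [e2] at h1 h2
    have e3 : J ∩ Ico u (u + ℓ) = (J ∩ Ico u (u + ℓ / 2)) ∪ (J ∩ Ico (u + ℓ / 2) (u + ℓ)) := by
      rw [← inter_union_distrib_left, Ico_union_Ico_eq_Ico (by linarith) (by linarith)]
    have hd : Disjoint (J ∩ Ico u (u + ℓ / 2)) (J ∩ Ico (u + ℓ / 2) (u + ℓ)) := by
      refine Disjoint.mono inter_subset_right inter_subset_right ?_
      rw [Set.disjoint_left]
      intro x hx hx'
      exact absurd hx'.1 (not_le.2 hx.2)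
    have hd2 : Disjoint (S.g k '' (J ∩ Ico u (u + ℓ / 2)))
        (S.g k '' (J ∩ Ico (u + ℓ / 2) (u + ℓ))) := by
      rw [Set.disjoint_left] at hd ⊢
      rintro _ ⟨x, hx, rfl⟩ ⟨y, hy, hxy⟩
      have he : y = x := (S.g_anti k hk).injOn (hJ hy.1) (hJ hx.1) hxy
      rw [he] at hy
      exact hd hx hy
    rw [e3, image_union, lintegral_union (hJm.inter measurableSet_Ico) hd,
      lintegral_union (himg _ _) hd2, mul_add]
    exact add_le_add h1 h2

lemma conf_J {S : NonlinearIFS} {c α : ℝ} (hS : Consts S c α) {k : ℕ} (hk : 1 ≤ k)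
    {a : ℝ} (ha : 0 ≤ a) {f : ℝ → ℝ} (hf : LL a f) {h : ℝ} (hh : 0 < h) (hh1 : h ≤ 1)
    (J : Set ℝ) (hJm : MeasurableSet J) (hJ : J ⊆ Icc (0:ℝ) 1) :
    ∫⁻ x in J, ENNReal.ofReal (f (S.g k x) * |S.g' k x|) ∂(μH[h]) ≤
    ∫⁻ x in S.g k '' J, ENNReal.ofReal (f x) ∂(μH[h]) := by
  have e : J ∩ Ico 0 (0 + 2) = J := by
    refine inter_eq_left.2 fun x hx => ?_
    have := hJ hx
    exact ⟨this.1, by linarith [this.2]⟩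
  have h1 := fun m => conf_interval hS hk ha hf hh hh1 J hJm hJ m 0 2 (by norm_num)
  simp only [e] at h1
  have h2 : Tendsto (fun m : ℕ => ENNReal.ofReal (Real.exp (-(2 * (a + c) * 2 / 2 ^ m))))
      atTop (𝓝 1) := by
    have h3 : Tendsto (fun m : ℕ => 2 * (a + c) * 2 / (2:ℝ) ^ m) atTop (𝓝 0) :=
      tendsto_const_nhds.div_atTop (tendsto_pow_atTop_atTop_of_one_lt (by norm_num))
    have h4 := ENNReal.tendsto_ofReal ((Real.continuous_exp.tendsto _).comp h3.neg)
    simpa using h4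
  have h5 := ENNReal.Tendsto.mul_const (b := ∫⁻ x in J, ENNReal.ofReal (f (S.g k x) * |S.g' k x|)
    ∂(μH[h])) h2 (Or.inl one_ne_zero)
  rw [one_mul] at h5
  exact le_of_tendsto' h5 h1

/-- truncated transfer operator -/
def TT (S : NonlinearIFS) (N : ℕ) (f : ℝ → ℝ) : ℝ → ℝ :=
  fun x => ∑ k ∈ Finset.Icc 1 N, f (S.g k x) * |S.g' k x|

lemma TT_LL {S : NonlinearIFS} {c α : ℝ} (hS : Consts S c α) (N : ℕ)
    {a : ℝ} (ha : 0 ≤ a) {f : ℝ → ℝ} (hf : LL a f) : LL (a * α + c) (TT S N f) :=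
  LL.sum (F := fun k x => f (S.g k x) * |S.g' k x|) _ fun k hk => by
    have hk1 := (Finset.mem_Icc.1 hk).1
    exact hf.comp_mul ha (S.g_mapsI hk1) (hS.g_lip hk1) (hS.g'_LL hk1)

lemma lint_TT_le {S : NonlinearIFS} {c α : ℝ} (hS : Consts S c α) (N n : ℕ) (hN : N ≤ n)
    {a : ℝ} (ha : 0 ≤ a) {f : ℝ → ℝ} (hf : LL a f) {h : ℝ} (hh : 0 < h) (hh1 : h ≤ 1) :
    ∫⁻ x in limitSet S.g n, ENNReal.ofReal (TT S N f x) ∂(μH[h]) ≤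
    ∫⁻ x in limitSet S.g n, ENNReal.ofReal (f x) ∂(μH[h]) := by
  set J := limitSet S.g n with hJ
  have hJm : MeasurableSet J := (S.J_compact n).measurableSet
  have hJI := S.J_subI n
  have hmem : ∀ k ∈ Finset.Icc 1 N, k ∈ Icc 1 n := fun k hk =>
    ⟨(Finset.mem_Icc.1 hk).1, (Finset.mem_Icc.1 hk).2.trans hN⟩
  have hll : ∀ k ∈ Finset.Icc 1 N, LL (a * α + c) (fun x => f (S.g k x) * |S.g' k x|) := by
    intro k hk
    have hk1 := (Finset.mem_Icc.1 hk).1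
    exact hf.comp_mul ha (S.g_mapsI hk1) (hS.g_lip hk1) (hS.g'_LL hk1)
  have ha2 : 0 ≤ a * α + c := add_nonneg (mul_nonneg ha hS.a_pos.le) hS.c_pos.le
  calc ∫⁻ x in J, ENNReal.ofReal (TT S N f x) ∂(μH[h])
      = ∫⁻ x in J, ∑ k ∈ Finset.Icc 1 N, ENNReal.ofReal (f (S.g k x) * |S.g' k x|) ∂(μH[h]) := by
        refine setLIntegral_congr_fun hJm fun x hx => ?_
        simp only [TT]
        rw [ENNReal.ofReal_sum_of_nonneg]
        exact fun k hk => (hll k hk).nonneg (hJI hx)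
    _ = ∑ k ∈ Finset.Icc 1 N, ∫⁻ x in J, ENNReal.ofReal (f (S.g k x) * |S.g' k x|) ∂(μH[h]) := by
        refine lintegral_finsetSum' _ fun k hk => ?_
        exact ((((hll k hk).continuousOn ha2).mono hJI).aemeasurable hJm).ennreal_ofReal
    _ ≤ ∑ k ∈ Finset.Icc 1 N, ∫⁻ x in S.g k '' J, ENNReal.ofReal (f x) ∂(μH[h]) :=
        Finset.sum_le_sum fun k hk => conf_J hS (hmem k hk).1 ha hf hh hh1 J hJm hJI
    _ = ∫⁻ x in ⋃ k ∈ Finset.Icc 1 N, S.g k '' J, ENNReal.ofReal (f x) ∂(μH[h]) := by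
        rw [lintegral_biUnion_finset]
        · intro k hk l hl hkl
          exact S.J_disj n (hmem k hk) (hmem l hl) hkl
        · intro k hk
          exact ((S.J_compact n).image_of_continuousOn
            ((S.g_contI (hmem k hk).1).mono hJI)).measurableSet
    _ ≤ _ := lintegral_mono_set (iUnion₂_subset fun k hk =>
        (S.J_maps n (hmem k hk)).image_subset)

lemma integrable_of_contOn {P : Measure ℝ} [IsProbabilityMeasure P]
    (hP : P (Icc (0:ℝ) 1)ᶜ = 0) {f : ℝ → ℝ} (hf : ContinuousOn f (Icc (0:ℝ) 1)) :
    Integrable f P := by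
  have h1 : IntegrableOn f (Icc (0:ℝ) 1) P := hf.integrableOn_compact isCompact_Icc
  have h2 : P.restrict (Icc (0:ℝ) 1) = P := Measure.restrict_eq_self_of_ae_mem
    (by rw [ae_iff]; exact hP)
  rwa [IntegrableOn, h2] at h1

lemma normMeasure_props {S : NonlinearIFS} {c α : ℝ} (hS : Consts S c α) (n : ℕ) (hn : 2 ≤ n)
    (hh : 0 < S.h n) : IsProbabilityMeasure (normMeasure S n) ∧
      normMeasure S n (Icc (0:ℝ) 1)ᶜ = 0 ∧
      ∀ N ≤ n, ∀ a, 0 ≤ a → ∀ f, LL a f →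
        ∫ x, TT S N f x ∂(normMeasure S n) ≤ ∫ x, f x ∂(normMeasure S n) := by
  have ha : 0 ≤ c / (1 - α) := div_nonneg hS.c_pos.le (by linarith [hS.a_lt])
  have hac : c / (1 - α) * α + c ≤ c / (1 - α) := by
    have : 0 < 1 - α := by linarith [hS.a_lt]
    have : c / (1 - α) * (1 - α) = c := by field_simp
    linarith
  have h0 := J_ne_zero hS ha hac n hn hh
  have h1 := J_ne_top hS ha hac n hn hh (J_nonempty S n (by omega) hh)
  have hp : IsProbabilityMeasure (normMeasure S n) := ⟨by
    simp only [normMeasure, Measure.smul_apply, Measure.restrict_apply_univ, smul_eq_mul]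
    exact ENNReal.inv_mul_cancel h0 h1⟩
  have hs : normMeasure S n (Icc (0:ℝ) 1)ᶜ = 0 := by
    simp only [normMeasure, Measure.smul_apply, smul_eq_mul]
    rw [Measure.restrict_apply measurableSet_Icc.compl]
    have : (Icc (0:ℝ) 1)ᶜ ∩ limitSet S.g n = ∅ := by
      ext x
      simp only [mem_inter_iff, mem_compl_iff, mem_empty_iff_false, iff_false, not_and]
      intro hx hxJ
      exact hx (S.J_subI n hxJ)
    rw [this]; simp
  refine ⟨hp, hs, ?_⟩
  intro N hN a ha f hf
  have ha2 : 0 ≤ a * α + c := add_nonneg (mul_nonneg ha hS.a_pos.le) hS.c_pos.le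
  have hae : ∀ᵐ x ∂(normMeasure S n), x ∈ Icc (0:ℝ) 1 := by rw [ae_iff]; exact hs
  have hT := TT_LL hS N ha hf
  have i1 := integrable_of_contOn hs (hf.continuousOn ha)
  have i2 := integrable_of_contOn hs (hT.continuousOn ha2)
  have n1 : 0 ≤ᵐ[normMeasure S n] f := hae.mono fun x hx => hf.nonneg hx
  have n2 : 0 ≤ᵐ[normMeasure S n] TT S N f := hae.mono fun x hx => hT.nonneg hx
  rw [integral_eq_lintegral_of_nonneg_ae n1 i1.1, integral_eq_lintegral_of_nonneg_ae n2 i2.1]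
  refine ENNReal.toReal_mono i1.lintegral_lt_top.ne ?_
  simp only [normMeasure, lintegral_smul_measure]
  exact mul_le_mul' le_rfl (lint_TT_le hS N n hN ha hf hh (h_le_one S n (by omega)))

lemma lam_TT {S : NonlinearIFS} {c α : ℝ} (hS : Consts S c α) {a : ℝ} (ha : 0 ≤ a)
    {f : ℝ → ℝ} (hf : LL a f) (N : ℕ) :
    ∫ x in Icc (0:ℝ) 1, TT S N f x = ∫ x in S.b N..1, f x := by
  have hfc := hf.continuousOn ha
  have ii : ∀ i j, IntervalIntegrable f volume (S.b i) (S.b j) := by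
    intro i j
    refine (hfc.mono ?_).intervalIntegrable
    exact ordConnected_Icc.uIcc_subset ⟨(S.b_pos i).le, S.b_le_one i⟩ ⟨(S.b_pos j).le, S.b_le_one j⟩
  have ha2 : 0 ≤ a * α + c := add_nonneg (mul_nonneg ha hS.a_pos.le) hS.c_pos.le
  induction N with
  | zero => simp [TT, S.b_zero]
  | succ N ih =>
    have hk : 1 ≤ N + 1 := by omega
    have e : ∀ x, TT S (N + 1) f x = TT S N f x + f (S.g (N+1) x) * |S.g' (N+1) x| := by
      intro x
      simp only [TT]
      rw [Finset.sum_Icc_succ_top (by omega)]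
    have h1 : LL (a * α + c) (fun x => f (S.g (N+1) x) * |S.g' (N+1) x|) :=
      hf.comp_mul ha (S.g_mapsI hk) (hS.g_lip hk) (hS.g'_LL hk)
    simp only [e]
    rw [integral_add ((TT_LL hS N ha hf).continuousOn ha2).integrableOn_Icc
      (h1.continuousOn ha2).integrableOn_Icc, ih]
    have h2 := integral_image_eq_integral_abs_deriv_smul (f := S.g (N+1)) (f' := S.g' (N+1))
      measurableSet_Icc (fun x hx => (S.deriv1 _ hk x hx).hasDerivWithinAt)
      (S.g_anti _ hk).injOn f
    rw [S.g_image _ hk, Nat.add_sub_cancel] at h2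
    have h3 : ∫ x in Icc (0:ℝ) 1, f (S.g (N+1) x) * |S.g' (N+1) x| =
        ∫ x in S.b (N+1)..S.b N, f x := by
      rw [intervalIntegral.integral_of_le (S.b_anti.antitone (by omega)),
        ← integral_Icc_eq_integral_Ioc, h2]
      simp only [smul_eq_mul, mul_comm]
    rw [h3, add_comm, intervalIntegral.integral_add_adjacent_intervals (ii _ _)]
    rw [← S.b_zero]; exact ii _ _

lemma lam_TT_ge {S : NonlinearIFS} {c α : ℝ} (hS : Consts S c α) {a : ℝ} (ha : 0 ≤ a)
    {f : ℝ → ℝ} (hf : LL a f) (N : ℕ) :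
    (∫ x in Icc (0:ℝ) 1, f x) - S.b N * (Real.exp a * f 0) ≤ ∫ x in Icc (0:ℝ) 1, TT S N f x := by
  rw [lam_TT hS ha hf]
  have hfc := hf.continuousOn ha
  have hb : S.b N ∈ Icc (0:ℝ) 1 := ⟨(S.b_pos N).le, S.b_le_one N⟩
  have h0 : (0:ℝ) ∈ Icc (0:ℝ) 1 := by simp
  have h1 : (1:ℝ) ∈ Icc (0:ℝ) 1 := by simp
  have i1 : IntervalIntegrable f volume 0 (S.b N) :=
    (hfc.mono (ordConnected_Icc.uIcc_subset h0 hb)).intervalIntegrable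
  have i2 : IntervalIntegrable f volume (S.b N) 1 :=
    (hfc.mono (ordConnected_Icc.uIcc_subset hb h1)).intervalIntegrable
  rw [integral_Icc_eq_integral_Ioc, ← intervalIntegral.integral_of_le zero_le_one,
    ← intervalIntegral.integral_add_adjacent_intervals i1 i2]
  have : ∫ x in (0:ℝ)..S.b N, f x ≤ ∫ x in (0:ℝ)..S.b N, Real.exp a * f 0 :=
    intervalIntegral.integral_mono_on hb.1 i1 (by simp) fun x hx =>
      hf.bound ha ⟨hx.1, hx.2.trans hb.2⟩ h0
  rw [intervalIntegral.integral_const, smul_eq_mul, sub_zero] at this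
  linarith

def PP (S : NonlinearIFS) (t a : ℝ) : Prop :=
  ∀ f, LL a f → ∀ ε > 0, ∀ᶠ n in atTop,
    t * (∫ x in Icc (0:ℝ) 1, f x) - ε ≤ ∫ x, f x ∂(normMeasure S n)

lemma lam_nonneg {a : ℝ} {f : ℝ → ℝ} (hf : LL a f) : 0 ≤ ∫ x in Icc (0:ℝ) 1, f x :=
  setIntegral_nonneg measurableSet_Icc fun _ hx => hf.nonneg hx

lemma ev_props {S : NonlinearIFS} {c α : ℝ} (hS : Consts S c α) (N : ℕ) :
    ∀ᶠ n in atTop, IsProbabilityMeasure (normMeasure S n) ∧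
      normMeasure S n (Icc (0:ℝ) 1)ᶜ = 0 ∧
      ∀ a, 0 ≤ a → ∀ f, LL a f → ∫ x, TT S N f x ∂(normMeasure S n) ≤
        ∫ x, f x ∂(normMeasure S n) := by
  filter_upwards [h_pos_eventually S, eventually_ge_atTop N] with n hn hN
  obtain ⟨h1, h2, h3⟩ := normMeasure_props hS n hn.1 hn.2
  exact ⟨h1, h2, fun a ha f hf => h3 N hN a ha f hf⟩

lemma PP_zero {S : NonlinearIFS} {c α : ℝ} (hS : Consts S c α) (a : ℝ) : PP S 0 a := by
  intro f hf ε hε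
  filter_upwards [ev_props hS 0] with n hn
  have : 0 ≤ ∫ x, f x ∂(normMeasure S n) := by
    refine integral_nonneg_of_ae ?_
    have hae : ∀ᵐ x ∂(normMeasure S n), x ∈ Icc (0:ℝ) 1 := by rw [ae_iff]; exact hn.2.1
    exact hae.mono fun x hx => hf.nonneg hx
  linarith

lemma PP_stepA {S : NonlinearIFS} {c α : ℝ} (hS : Consts S c α) {t : ℝ} (ht : 0 ≤ t)
    (hP : ∀ a, 0 ≤ a → PP S t a) {a : ℝ} (ha : 0 ≤ a) :
    PP S (t + (1 - t) * Real.exp (-a)) a := by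
  intro f hf ε hε
  set L := ∫ x in Icc (0:ℝ) 1, f x with hL
  have hfc := hf.continuousOn ha
  have hlow : ∀ x ∈ Icc (0:ℝ) 1, Real.exp (-a) * L ≤ f x := by
    intro x hx
    have h1 : L ≤ ∫ y in Icc (0:ℝ) 1, Real.exp a * f x :=
      setIntegral_mono_on hfc.integrableOn_Icc continuousOn_const.integrableOn_Icc measurableSet_Icc
        fun y hy => hf.bound ha hy hx
    rw [setIntegral_const] at h1
    simp at h1
    rw [Real.exp_neg, inv_mul_eq_div, div_le_iff₀ (Real.exp_pos _)]
    linarith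
  obtain ⟨K, hK, hlip⟩ := hf.lipschitz ha
  have hF : LL (K / (ε / 2)) (fun x => f x + (ε / 2 - Real.exp (-a) * L)) := by
    refine LL.of_lipschitz (by positivity) (fun x hx => ?_) (fun x hx y hy => ?_)
    · linarith [hlow x hx]
    · have := hlip x hx y hy
      simpa using this
  have hev := hP _ (by positivity) _ hF (ε / 2) (by positivity)
  filter_upwards [hev, ev_props hS 0] with n hn hp
  have := hp.1
  rw [integral_add hfc.integrableOn_Icc (by simp),
    integral_add (integrable_of_contOn hp.2.1 hfc) (by simp)] at hn
  simp at hn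
  have : 0 ≤ t * (ε / 2) := by positivity
  rw [← hL] at hn
  nlinarith

lemma PP_stepB {S : NonlinearIFS} {c α : ℝ} (hS : Consts S c α) {t : ℝ} (ht : 0 ≤ t) (ht1 : t ≤ 1)
    {a : ℝ} (ha : 0 ≤ a) (hP : PP S t (a * α + c)) : PP S t a := by
  intro f hf ε hε
  have hM : 0 ≤ Real.exp a * f 0 := mul_nonneg (Real.exp_pos _).le (hf.nonneg (by simp))
  have hb : Tendsto (fun N => S.b N * (Real.exp a * f 0)) atTop (𝓝 0) := by
    simpa using S.b_lim.mul_const (Real.exp a * f 0)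
  obtain ⟨N, hN⟩ := (hb.eventually_lt_const (half_pos hε)).exists
  have h1 := lam_TT_ge hS ha hf N
  filter_upwards [hP _ (TT_LL hS N ha hf) (ε / 2) (half_pos hε), ev_props hS N] with n hn hp
  have h2 := hp.2.2 a ha f hf
  have h3 := mul_le_mul_of_nonneg_left h1 ht
  have h4 : t * (S.b N * (Real.exp a * f 0)) ≤ ε / 2 := by
    have : 0 ≤ S.b N * (Real.exp a * f 0) := mul_nonneg (S.b_pos N).le hM
    nlinarith
  linarith

lemma PP_all {S : NonlinearIFS} {c α : ℝ} (hS : Consts S c α) {t : ℝ} (ht : 0 ≤ t) (ht1 : t ≤ 1)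
    (hP : PP S t (c / (1 - α) + 1)) (a : ℝ) : PP S t a := by
  have hα := hS.a_pos
  have hα1 : 0 < 1 - α := by linarith [hS.a_lt]
  have hc : 0 ≤ c / (1 - α) := div_nonneg hS.c_pos.le hα1.le
  have key : ∀ j : ℕ, PP S t (c / (1 - α) + (α⁻¹) ^ j) := by
    intro j
    induction j with
    | zero => simpa using hP
    | succ j ih =>
      refine PP_stepB hS ht ht1 (by positivity) ?_
      have : (c / (1 - α) + α⁻¹ ^ (j + 1)) * α + c = c / (1 - α) + α⁻¹ ^ j := by
        rw [pow_succ]; field_simp; ring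
      rwa [this]
  have hlim : Tendsto (fun j : ℕ => (α⁻¹) ^ j) atTop atTop :=
    tendsto_pow_atTop_atTop_of_one_lt ((one_lt_inv₀ hα).2 hS.a_lt)
  obtain ⟨j, hj⟩ := (hlim.eventually_ge_atTop a).exists
  intro f hf
  exact key j f (hf.mono (by linarith))

lemma PP_one {S : NonlinearIFS} {c α : ℝ} (hS : Consts S c α) (a : ℝ) : PP S 1 a := by
  have hα1 : 0 < 1 - α := by linarith [hS.a_lt]
  have hc : 0 ≤ c / (1 - α) := div_nonneg hS.c_pos.le hα1.le
  set θ := Real.exp (-(c / (1 - α) + 1)) with hθ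
  have hθ0 : 0 < θ := Real.exp_pos _
  have hθ1 : θ < 1 := Real.exp_lt_one_iff.2 (by linarith)
  have key : ∀ i : ℕ, ∀ a, PP S (1 - (1 - θ) ^ i) a := by
    intro i
    induction i with
    | zero => intro a; simpa using PP_zero hS a
    | succ i ih =>
      have h0 : 0 ≤ (1 - θ) ^ i := pow_nonneg (by linarith) _
      have h1 : (1 - θ) ^ i ≤ 1 := pow_le_one₀ (by linarith) (by linarith)
      have h0' : 0 ≤ (1 - θ) ^ (i+1) := pow_nonneg (by linarith) _
      have h1' : (1 - θ) ^ (i+1) ≤ 1 := pow_le_one₀ (by linarith) (by linarith)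
      refine PP_all hS (by linarith) (by linarith) ?_
      have := PP_stepA hS (by linarith) (fun a _ => ih a) (a := c / (1 - α) + 1) (by linarith)
      rw [← hθ] at this
      convert this using 1
      ring
  intro f hf ε hε
  have hlim : Tendsto (fun i : ℕ => (1 - θ) ^ i * ∫ x in Icc (0:ℝ) 1, f x) atTop (𝓝 0) := by
    simpa using (tendsto_pow_atTop_nhds_zero_of_lt_one (by linarith : 0 ≤ 1 - θ)
      (by linarith)).mul_const (∫ x in Icc (0:ℝ) 1, f x)
  obtain ⟨i, hi⟩ := (hlim.eventually_lt_const (half_pos hε)).exists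
  filter_upwards [key i a f hf (ε / 2) (half_pos hε)] with n hn
  linarith

/-- one-sided convergence for Lipschitz functions -/
lemma lip_lower {S : NonlinearIFS} {c α : ℝ} (hS : Consts S c α) {f : ℝ → ℝ} {K : ℝ}
    (hfc : ContinuousOn f (Icc (0:ℝ) 1))
    (hlip : ∀ x ∈ Icc (0:ℝ) 1, ∀ y ∈ Icc (0:ℝ) 1, |f x - f y| ≤ K * |x - y|) {ε : ℝ} (hε : 0 < ε) :
    ∀ᶠ n in atTop, (∫ x in Icc (0:ℝ) 1, f x) - ε ≤ ∫ x, f x ∂(normMeasure S n) := by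
  obtain ⟨C, hC⟩ := isCompact_Icc.exists_bound_of_continuousOn hfc
  have hF : LL (K / 1) (fun x => f x + (C + 1)) := by
    refine LL.of_lipschitz one_pos (fun x hx => ?_) (fun x hx y hy => ?_)
    · have := (abs_le.1 (hC x hx)).1
      linarith
    · have := hlip x hx y hy
      simpa using this
  filter_upwards [PP_one hS _ _ hF ε hε, ev_props hS 0] with n hn hp
  have := hp.1
  rw [integral_add hfc.integrableOn_Icc (by simp),
    integral_add (integrable_of_contOn hp.2.1 hfc) (by simp)] at hn
  simp at hn
  linarith

lemma poly_lip (p : Polynomial ℝ) : ∃ K : ℝ, ∀ x ∈ Icc (0:ℝ) 1, ∀ y ∈ Icc (0:ℝ) 1,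
    |p.eval x - p.eval y| ≤ K * |x - y| := by
  obtain ⟨C, hC⟩ := isCompact_Icc.exists_bound_of_continuousOn
    (p.derivative.continuous.continuousOn (s := Icc (0:ℝ) 1))
  refine ⟨C, fun x hx y hy => ?_⟩
  exact (convex_Icc (0:ℝ) 1).norm_image_sub_le_of_norm_hasDerivWithin_le
    (fun x _ => (p.hasDerivAt x).hasDerivWithinAt) hC hy hx

lemma cont_lower {S : NonlinearIFS} {c α : ℝ} (hS : Consts S c α) {f : ℝ → ℝ}
    (hfc : ContinuousOn f (Icc (0:ℝ) 1)) {ε : ℝ} (hε : 0 < ε) :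
    ∀ᶠ n in atTop, (∫ x in Icc (0:ℝ) 1, f x) - ε ≤ ∫ x, f x ∂(normMeasure S n) := by
  obtain ⟨p, hp⟩ := exists_polynomial_near_of_continuousOn 0 1 f hfc (ε / 3) (by positivity)
  obtain ⟨K, hK⟩ := poly_lip p
  have hpc : ContinuousOn (fun x => p.eval x) (Icc (0:ℝ) 1) := p.continuous.continuousOn
  have h1 : (∫ x in Icc (0:ℝ) 1, f x) ≤ ∫ x in Icc (0:ℝ) 1, (p.eval x + ε / 3) := by
    refine setIntegral_mono_on hfc.integrableOn_Icc
      (hpc.add continuousOn_const).integrableOn_Icc measurableSet_Icc fun x hx => ?_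
    linarith [(abs_lt.1 (hp x hx)).1]
  rw [integral_add hpc.integrableOn_Icc (by simp)] at h1
  simp at h1
  filter_upwards [lip_lower hS hpc hK (ε := ε / 3) (by positivity), ev_props hS 0] with n hn hq
  have := hq.1
  have hae : ∀ᵐ x ∂(normMeasure S n), x ∈ Icc (0:ℝ) 1 := by rw [ae_iff]; exact hq.2.1
  have h2 : ∫ x, (p.eval x) ∂(normMeasure S n) ≤ ∫ x, (f x + ε / 3) ∂(normMeasure S n) := by
    refine integral_mono_ae (integrable_of_contOn hq.2.1 hpc)
      (integrable_of_contOn hq.2.1 (hfc.add continuousOn_const)) (hae.mono fun x hx => ?_)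
    show p.eval x ≤ f x + ε / 3
    linarith [(abs_lt.1 (hp x hx)).2]
  rw [integral_add (integrable_of_contOn hq.2.1 hfc) (by simp)] at h2
  simp at h2
  linarith

lemma main_aux (S : NonlinearIFS)
    (f : ℝ → ℝ) (hf : Continuous f) :
    Filter.Tendsto (fun n : ℕ => ∫ x, f x ∂(normMeasure S n)) Filter.atTop
      (nhds (∫ x in Set.Icc (0 : ℝ) 1, f x)) := by
  obtain ⟨c, α, hS⟩ := S.exists_consts
  rw [Metric.tendsto_nhds]
  intro ε hε
  filter_upwards [cont_lower hS hf.continuousOn (half_pos hε),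
    cont_lower hS hf.neg.continuousOn (half_pos hε)] with n h1 h2
  simp only [Pi.neg_apply, integral_neg] at h2
  rw [Real.dist_eq, abs_lt]
  constructor <;> linarith

/-- In the nonlinear setting, the normalized Hausdorff measures `m_n` converge weak-* to
    Lebesgue measure on `[0,1]`: the integral of any bounded continuous function against `m_n`
    converges to its Lebesgue integral over `[0,1]`. -/
theorem nonlinear_weak_star_convergence (S : NonlinearIFS)
    (f : ℝ → ℝ) (hf : Continuous f) (hfb : ∃ C : ℝ, ∀ x : ℝ, |f x| ≤ C) :
    Filter.Tendsto (fun n : ℕ => ∫ x, f x ∂(normMeasure S n)) Filter.atTop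
      (nhds (∫ x in Set.Icc (0 : ℝ) 1, f x)) := by
  exact main_aux S f hf
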